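/- Let 0<s<2 and let Ω satisfy (H). If Ω̃(φ₀)<0 for some φ₀, then for every ε>0 there exists a bounded measurable function μ:ℝ²→ℝ, supported in the closed ball of radius ε centered at 0, with ∫_{ℝ²} μ(x) dx = 0 and E[μ] < 0. -/

import Mathlib

/-!
The proof is by contradiction. Suppose every bounded mean-zero density supported in the ball of radius
`ε` has nonnegative energy. For mean-zero `μ` the confinement `|x|²` contributes a nonpositive amount
(`energyR_le`), so the quadratic form `Q` of the homogeneous kernel `k(x) = |x|^{-s} Ω(θ(x))` is
nonnegative on these densities. Homogeneity of `k` removes the restriction on the support (`Q_scale`);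
pairing a density with a negative copy of itself pushed off to infinity removes the mean-zero condition
(`Q_far`); truncation removes compactness of the support (`Q_nonneg`).

Testing `Q` with Gaussian wave packets of frequency `e_φ` shows that the Fourier transform at `e_φ` of
`k(x) e^{-u|x|²}` is nonnegative (`wave_packet`, `G_nonneg`). Since `e^{-δr}` is a positive superposition
of Gaussians (`subordination`), the same holds for `P(δ)`, the Fourier transform of `k(x) e^{-δ|x|}`.

Finally `P(δ) → Ω̃(φ)` as `δ → 0⁺` (`P_tendsto_Omt`), so that `Ω̃ ≥ 0`. To see this, split `Ω` into
`Ω - Ω(φ + π/2)` and a constant. In polar coordinates the radial integrals are real parts of Laplace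
transforms of powers (`radial_eq`), and the first part vanishes linearly in the direction orthogonal to
`e_φ`, which makes dominated convergence possible (`P_tendsto_of_vanish`) and gives the term with `τ_{2-s}`.
For the constant part, writing `|x|^{-s}` as a superposition of Gaussians gives the value `c_s`
(`G_one_tendsto`), which passes from the Gaussian to the exponential regularisation by `P_tendsto_of_G`.
-/

open MeasureTheory Real Filter Set Topology
open scoped ENNReal

noncomputable section

namespace Aniso

/-- The Euclidean norm on `ℝ × ℝ`. -/
def nrm (x : ℝ × ℝ) : ℝ := Real.sqrt (x.1 ^ 2 + x.2 ^ 2)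

/-- The angle `θ(x) ∈ [-π, π)` of a nonzero point `x ∈ ℝ²`,
so that `x / |x| = (cos (ang x), sin (ang x))`. -/
def ang (x : ℝ × ℝ) : ℝ :=
  if Complex.arg ⟨x.1, x.2⟩ = π then -π else Complex.arg ⟨x.1, x.2⟩

/-- The unit vector `e_φ = (cos φ, sin φ)`. -/
def eVec (φ : ℝ) : ℝ × ℝ := (Real.cos φ, Real.sin φ)

/-- The constant `τ_s = (2π)^{-s} Γ(s) cos(sπ/2)`. -/
def tauC (s : ℝ) : ℝ := (2 * π) ^ (-s) * Real.Gamma s * Real.cos (s * π / 2)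

/-- The constant `c_s = π^{s-1} Γ((2-s)/2) / Γ(s/2)`. -/
def cC (s : ℝ) : ℝ := π ^ (s - 1) * Real.Gamma ((2 - s) / 2) / Real.Gamma (s / 2)

/-- Hypothesis (H): `Ω` is smooth, 2π-periodic, strictly positive and π-periodic. -/
def SatisfiesH (Ω : ℝ → ℝ) : Prop :=
  ContDiff ℝ (⊤ : ℕ∞) Ω ∧ (∀ θ, Ω (θ + 2 * π) = Ω θ) ∧ (∀ θ, 0 < Ω θ) ∧ ∀ θ, Ω (θ + π) = Ω θ

/-- Hypothesis (h): `ω` is smooth, 2π-periodic, nonnegative, not identically zero,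
π-periodic, and `ω(π/2) = 0`. -/
def Satisfiesh (ω : ℝ → ℝ) : Prop :=
  ContDiff ℝ (⊤ : ℕ∞) ω ∧ (∀ θ, ω (θ + 2 * π) = ω θ) ∧ (∀ θ, 0 ≤ ω θ) ∧ (∃ θ, ω θ ≠ 0) ∧
    (∀ θ, ω (θ + π) = ω θ) ∧ ω (π / 2) = 0

/-- The transformed angle function `Ω̃`. -/
def Omt (s : ℝ) (Ω : ℝ → ℝ) (φ : ℝ) : ℝ :=
  tauC (2 - s) * (∫ θ in (-π)..π, |Real.cos (φ - θ)| ^ (-2 + s) * (Ω θ - Ω (φ + π / 2)))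
    + cC s * Ω (φ + π / 2)

/-- The interaction potential `W(x) = |x|^{-s} Ω(θ(x)) + |x|²` as an `[0,∞]`-valued
kernel, with `W(0) = ∞`. -/
def Wkernel (s : ℝ) (Ω : ℝ → ℝ) (x : ℝ × ℝ) : ℝ≥0∞ :=
  if x = 0 then ⊤ else ENNReal.ofReal (nrm x ^ (-s) * Ω (ang x) + nrm x ^ 2)

/-- The interaction energy `E[ρ] = (1/2) ∬ W(x-y) dρ(y) dρ(x) ∈ [0,∞]`. -/
def energy (s : ℝ) (Ω : ℝ → ℝ) (ρ : Measure (ℝ × ℝ)) : ℝ≥0∞ :=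
  (1 / 2 : ℝ≥0∞) * ∫⁻ x, ∫⁻ y, Wkernel s Ω (x - y) ∂ρ ∂ρ

/-- The real-valued interaction potential (with junk value `0` at the origin,
which is Lebesgue negligible). -/
def Wr (s : ℝ) (Ω : ℝ → ℝ) (x : ℝ × ℝ) : ℝ := nrm x ^ (-s) * Ω (ang x) + nrm x ^ 2

/-- `ρ` minimizes the energy `E` among probability measures on `ℝ²`. -/
def IsMinimizer (E : Measure (ℝ × ℝ) → ℝ≥0∞) (ρ : Measure (ℝ × ℝ)) : Prop :=
  IsProbabilityMeasure ρ ∧ ∀ μ : Measure (ℝ × ℝ), IsProbabilityMeasure μ → E ρ ≤ E μ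

/-- `ρ` is the unique minimizer of `E` up to translation: it is a minimizer and every
minimizer is a translate of it. -/
def IsUniqueMinimizer (E : Measure (ℝ × ℝ) → ℝ≥0∞) (ρ : Measure (ℝ × ℝ)) : Prop :=
  IsMinimizer E ρ ∧ ∀ μ, IsMinimizer E μ → ∃ v : ℝ × ℝ, μ = Measure.map (fun x => x + v) ρ

def R2 (s : ℝ) : ℝ := (8 * Real.sin (s * π / 2) / (s ^ 2 * (2 + s) * π)) ^ (-(1 / (s + 2)))

def C2 (s : ℝ) : ℝ := 4 * Real.sin (s * π / 2) / (s ^ 2 * π ^ 2)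

/-- The density `ρ₂(x) = C₂ (R₂² - |x|²)₊^{s/2}`. -/
def rho2 (s : ℝ) (x : ℝ × ℝ) : ℝ := C2 s * (max (R2 s ^ 2 - nrm x ^ 2) 0) ^ (s / 2)

def rho2meas (s : ℝ) : Measure (ℝ × ℝ) := volume.withDensity fun x => ENNReal.ofReal (rho2 s x)

/-- Counterclockwise rotation of `ℝ²` by the angle `η`. -/
def Rot (η : ℝ) (x : ℝ × ℝ) : ℝ × ℝ :=
  (x.1 * Real.cos η - x.2 * Real.sin η, x.1 * Real.sin η + x.2 * Real.cos η)

/-- The measure `ρ_{a,b,η}`: the pushforward of `ρ₂(x) dx` under `x ↦ R_η (a x₁, b x₂)`. -/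
def rhoE (s a b η : ℝ) : Measure (ℝ × ℝ) :=
  Measure.map (fun x => Rot η (a * x.1, b * x.2)) (rho2meas s)

/-- The measure `ρ_{a,b} = ρ_{a,b,0}`. -/
def rhoAB (s a b : ℝ) : Measure (ℝ × ℝ) := rhoE s a b 0

/-- The Beta function. -/
def BetaR (x y : ℝ) : ℝ := Real.Gamma x * Real.Gamma y / Real.Gamma (x + y)

def C1 (s : ℝ) : ℝ := 2 * Real.cos (s * π / 2) / (s * (s + 1) * π)

def R1 (s : ℝ) : ℝ := (C1 s * BetaR (1 / 2) ((3 + s) / 2)) ^ (-(1 / (s + 2)))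

/-- The density `ρ₁(t) = C₁ (R₁² - t²)₊^{(1+s)/2}` on `ℝ`. -/
def rho1 (s t : ℝ) : ℝ := C1 s * (max (R1 s ^ 2 - t ^ 2) 0) ^ ((1 + s) / 2)

def rho1meas (s : ℝ) : Measure ℝ := volume.withDensity fun t => ENNReal.ofReal (rho1 s t)

/-- The measure `ρ_{1D}`: the pushforward of `ρ₁(t) dt` under `t ↦ (0, t)`. -/
def rho1D (s : ℝ) : Measure (ℝ × ℝ) := Measure.map (fun t : ℝ => ((0 : ℝ), t)) (rho1meas s)

/-- The support of a measure: points all of whose neighborhoods have positive measure. -/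
def msupport {α : Type*} [TopologicalSpace α] [MeasurableSpace α] (μ : Measure α) : Set α :=
  {x | ∀ U ∈ 𝓝 x, 0 < μ U}

def Acoef (s : ℝ) (Ω : ℝ → ℝ) (a b : ℝ) : ℝ :=
  tauC s * (R1 s / R2 s) ^ (2 + s) *
    ∫ φ in (-π)..π,
      (a ^ 2 * Real.cos φ ^ 2 + b ^ 2 * Real.sin φ ^ 2) ^ (-(2 + s) / 2) *
        Real.cos φ ^ 2 * Omt s Ω φ

def Bcoef (s : ℝ) (Ω : ℝ → ℝ) (a b : ℝ) : ℝ :=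
  tauC s * (R1 s / R2 s) ^ (2 + s) *
    ∫ φ in (-π)..π,
      (a ^ 2 * Real.cos φ ^ 2 + b ^ 2 * Real.sin φ ^ 2) ^ (-(2 + s) / 2) *
        Real.sin φ ^ 2 * Omt s Ω φ

def Dcoef (s : ℝ) (Ω : ℝ → ℝ) (a b : ℝ) : ℝ :=
  tauC s * (R1 s / R2 s) ^ (2 + s) *
    ∫ φ in (-π)..π,
      (a ^ 2 * Real.cos φ ^ 2 + b ^ 2 * Real.sin φ ^ 2) ^ (-(2 + s) / 2) *
        (Real.cos φ * Real.sin φ) * Omt s Ω φ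

def Mfun (s : ℝ) (Ω : ℝ → ℝ) (a b : ℝ) : ℝ :=
  tauC s * (R1 s / R2 s) ^ (2 + s) *
    ∫ φ in (-π)..π, (a ^ 2 * Real.cos φ ^ 2 + b ^ 2 * Real.sin φ ^ 2) ^ (-s / 2) * Omt s Ω φ

def calE (s : ℝ) (Ω : ℝ → ℝ) (a b : ℝ) : ℝ := Mfun s Ω a b + s / 2 * (a ^ 2 + b ^ 2)

/-- A measure has compact support. -/
def HasCompactSupportM (ρ : Measure (ℝ × ℝ)) : Prop :=
  ∃ K : Set (ℝ × ℝ), IsCompact K ∧ ρ Kᶜ = 0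

/-- The linear interpolation `(1-t) ρ₀ + t ρ₁`. -/
def mix (ρ₀ ρ₁ : Measure (ℝ × ℝ)) (t : ℝ) : Measure (ℝ × ℝ) :=
  ENNReal.ofReal (1 - t) • ρ₀ + ENNReal.ofReal t • ρ₁

/-- Linear interpolation convexity (LIC): for any two distinct compactly supported
probability measures of finite energy with the same center of mass, the energy is
strictly convex along their linear interpolation. -/
def LIC (s : ℝ) (Ω : ℝ → ℝ) : Prop :=
  ∀ ρ₀ ρ₁ : Measure (ℝ × ℝ), IsProbabilityMeasure ρ₀ → IsProbabilityMeasure ρ₁ →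
    HasCompactSupportM ρ₀ → HasCompactSupportM ρ₁ →
    energy s Ω ρ₀ < ⊤ → energy s Ω ρ₁ < ⊤ → ρ₀ ≠ ρ₁ →
    (∫ x, x ∂ρ₀) = (∫ x, x ∂ρ₁) →
    StrictConvexOn ℝ (Set.Icc (0 : ℝ) 1) fun t => (energy s Ω (mix ρ₀ ρ₁ t)).toReal

/-- The interaction energy of a bounded compactly supported signed density. -/
def energyR (s : ℝ) (Ω : ℝ → ℝ) (μ : ℝ × ℝ → ℝ) : ℝ :=
  (1 / 2) * ∫ x : ℝ × ℝ, (∫ y : ℝ × ℝ, Wr s Ω (x - y) * μ y) * μ x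

/-- The logarithmic potential `W_log(x) = -ln|x| + Ω(θ(x)) + |x|²` (real valued,
with junk value at the origin). -/
def Wlog (Ω : ℝ → ℝ) (x : ℝ × ℝ) : ℝ := -Real.log (nrm x) + Ω (ang x) + nrm x ^ 2

def WlogKernel (Ω : ℝ → ℝ) (x : ℝ × ℝ) : ℝ≥0∞ :=
  if x = 0 then ⊤ else ENNReal.ofReal (Wlog Ω x)

/-- The logarithmic interaction energy. -/
def energyLog (Ω : ℝ → ℝ) (ρ : Measure (ℝ × ℝ)) : ℝ≥0∞ :=
  (1 / 2 : ℝ≥0∞) * ∫⁻ x, ∫⁻ y, WlogKernel Ω (x - y) ∂ρ ∂ρ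

/-- The family `W_{(s)}(x) = |x|^{-s} (1/s + Ω(θ(x))) - 1/s + |x|²`. -/
def Wsfam (s : ℝ) (Ω : ℝ → ℝ) (x : ℝ × ℝ) : ℝ :=
  nrm x ^ (-s) * (1 / s + Ω (ang x)) - 1 / s + nrm x ^ 2

/-- The transformed angle function of `W_{(s)}`. -/
def Omts (s : ℝ) (Ω : ℝ → ℝ) (φ : ℝ) : ℝ :=
  tauC (2 - s) * (∫ θ in (-π)..π, |Real.cos (φ - θ)| ^ (-2 + s) * (Ω θ - Ω (φ + π / 2)))
    + cC s * (1 / s + Ω (φ + π / 2))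

/-- The truncated integral appearing in the principal value defining `Ω̃_log`. -/
def pvInt (Ω : ℝ → ℝ) (φ δ : ℝ) : ℝ :=
  ∫ θ in {θ : ℝ | θ ∈ Set.Icc (-π) π ∧ δ ≤ |Real.cos (φ - θ)|},
    |Real.cos (φ - θ)| ^ (-(2 : ℝ)) * (Ω θ - Ω (φ + π / 2))

def OmtLogFam (Ω : ℝ → ℝ) (φ δ : ℝ) : ℝ :=
  -((2 * π) ^ (-(2 : ℝ))) * pvInt Ω φ δ + (2 * π)⁻¹

/-- The transformed angle function `Ω̃_log`, defined as the principal value limit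
(via `limUnder`, which returns the limit whenever it exists). -/
def OmtLog (Ω : ℝ → ℝ) (φ : ℝ) : ℝ := limUnder (𝓝[>] (0 : ℝ)) (OmtLogFam Ω φ)

/-- The closed elliptical region `B(0; a, b)`. -/
def ellipseSet (a b : ℝ) : Set (ℝ × ℝ) := {x | x.1 ^ 2 / a ^ 2 + x.2 ^ 2 / b ^ 2 ≤ 1}

def ALog (Ω : ℝ → ℝ) (a b : ℝ) : ℝ :=
  ∫ φ in (-π)..π,
    (a ^ 2 * Real.cos φ ^ 2 + b ^ 2 * Real.sin φ ^ 2)⁻¹ * Real.cos φ ^ 2 * OmtLog Ω φ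

def BLog (Ω : ℝ → ℝ) (a b : ℝ) : ℝ :=
  ∫ φ in (-π)..π,
    (a ^ 2 * Real.cos φ ^ 2 + b ^ 2 * Real.sin φ ^ 2)⁻¹ * Real.sin φ ^ 2 * OmtLog Ω φ

def DLog (Ω : ℝ → ℝ) (a b : ℝ) : ℝ :=
  ∫ φ in (-π)..π,
    (a ^ 2 * Real.cos φ ^ 2 + b ^ 2 * Real.sin φ ^ 2)⁻¹ *
      (Real.cos φ * Real.sin φ) * OmtLog Ω φ

/-- The uniform probability measure on the rotated ellipse `B(0; a, b, η)`. -/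
def unifEllipse (a b η : ℝ) : Measure (ℝ × ℝ) :=
  volume.withDensity ((Rot η '' ellipseSet a b).indicator fun _ => ENNReal.ofReal ((π * a * b)⁻¹))

/-- The pushforward of the density `(2/(πb²)) (b² - t²)₊^{1/2} dt` under `t ↦ R_η (0, t)`. -/
def semicirc (b η : ℝ) : Measure (ℝ × ℝ) :=
  Measure.map (fun t : ℝ => Rot η (0, t))
    (volume.withDensity fun t =>
      ENNReal.ofReal (2 / (π * b ^ 2) * (max (b ^ 2 - t ^ 2) 0) ^ ((1 : ℝ) / 2)))

/-- The vertical semicircle measure `ρ_{1D}` for the logarithmic case. -/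
def rho1Dlog : Measure (ℝ × ℝ) :=
  Measure.map (fun t : ℝ => ((0 : ℝ), t))
    (volume.withDensity fun t => ENNReal.ofReal (2 / π * (max (1 - t ^ 2) 0) ^ ((1 : ℝ) / 2)))

/-- The measure `ψ(t) dt` placed on the vertical axis. -/
def rhoPsi (ψ : ℝ → ℝ) : Measure (ℝ × ℝ) :=
  Measure.map (fun t : ℝ => ((0 : ℝ), t)) (volume.withDensity fun t => ENNReal.ofReal (ψ t))


/-! ### Laplace transforms and one-dimensional integrals -/

/-- The Laplace transform of `t ^ (a - 1)` on the whole right half-plane. It is known on the real axis;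
both sides are holomorphic, so the identity theorem extends it. -/
theorem gamma_laplace {a : ℝ} (ha : 0 < a) {z : ℂ} (hz : 0 < z.re) :
    ∫ t : ℝ in Ioi 0, (t : ℂ) ^ ((a : ℂ) - 1) * Complex.exp (-(z * t)) =
      (1 / z) ^ (a : ℂ) * Complex.Gamma a := by
  have hint : ∀ ε : ℝ, 0 < ε → IntegrableOn (fun t : ℝ => t ^ (a - 1) * Real.exp (-(ε * t))) (Ioi 0) := by
    intro ε hε
    have := integrableOn_rpow_mul_exp_neg_mul_rpow (p := 1) (s := a - 1) (b := ε) (by linarith) one_pos hε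
    refine this.congr_fun (fun t _ => ?_) measurableSet_Ioi
    simp
  have hmeas : ∀ w : ℂ, AEStronglyMeasurable
      (fun t : ℝ => (t : ℂ) ^ ((a : ℂ) - 1) * Complex.exp (-(w * t))) (volume.restrict (Ioi 0)) := by
    intro w
    refine ContinuousOn.aestronglyMeasurable ?_ measurableSet_Ioi
    refine ContinuousOn.mul ?_ (by fun_prop)
    intro t ht
    exact (Complex.continuousAt_ofReal_cpow_const t _ (Or.inr (ne_of_gt ht))).continuousWithinAt
  have hmeas' : ∀ w : ℂ, AEStronglyMeasurable
      (fun t : ℝ => (t : ℂ) ^ ((a : ℂ) - 1) * (Complex.exp (-(w * t)) * (-t)))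
        (volume.restrict (Ioi 0)) := by
    intro w
    have := (hmeas w).mul (Complex.continuous_ofReal.neg.aestronglyMeasurable)
    refine this.congr (Eventually.of_forall fun t => ?_)
    simp only [Pi.mul_apply, Pi.neg_apply]
    ring
  have hnorm : ∀ (w : ℂ) (t : ℝ), 0 < t →
      ‖(t : ℂ) ^ ((a : ℂ) - 1) * Complex.exp (-(w * t))‖ = t ^ (a - 1) * Real.exp (-(w.re * t)) := by
    intro w t ht
    rw [norm_mul, Complex.norm_cpow_eq_rpow_re_of_pos ht, Complex.norm_exp]
    simp
  -- the Laplace transform is holomorphic in the right half-plane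
  have hdiff : DifferentiableOn ℂ
      (fun w : ℂ => ∫ t : ℝ in Ioi 0, (t : ℂ) ^ ((a : ℂ) - 1) * Complex.exp (-(w * t)))
      {w : ℂ | 0 < w.re} := by
    intro w hw
    have hw' : 0 < w.re := hw
    refine (hasDerivAt_integral_of_dominated_loc_of_deriv_le (𝕜 := ℂ)
      (F' := fun w' t => (t : ℂ) ^ ((a : ℂ) - 1) * (Complex.exp (-(w' * t)) * (-t)))
      (bound := fun t : ℝ => t ^ a * Real.exp (-((w.re / 2) * t)))
      (s := Metric.ball w (w.re / 2))
      (Metric.ball_mem_nhds w (by positivity)) (Eventually.of_forall hmeas) ?_ (hmeas' w) ?_ ?_ ?_).2.differentiableAt.differentiableWithinAt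
    · refine Integrable.mono' (hint w.re hw') (hmeas w) ?_
      filter_upwards [ae_restrict_mem measurableSet_Ioi] with t ht
      exact (hnorm w t ht).le
    · filter_upwards [ae_restrict_mem measurableSet_Ioi] with t ht w' hw'
      have ht' : (0 : ℝ) < t := ht
      rw [← mul_assoc, norm_mul, hnorm w' t ht, norm_neg, Complex.norm_real, Real.norm_of_nonneg ht'.le]
      have h1 : w.re / 2 ≤ w'.re := by
        have := (Complex.abs_re_le_norm (w' - w)).trans (by simpa [dist_eq_norm] using (Metric.mem_ball.1 hw').le)
        rw [Complex.sub_re, abs_le] at this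
        linarith [this.1]
      have h2 : t ^ a = t ^ (a - 1) * t := by
        rw [← Real.rpow_add_one ht'.ne']; simp
      rw [h2]
      have : Real.exp (-(w'.re * t)) ≤ Real.exp (-(w.re / 2 * t)) := by gcongr
      calc _ = t ^ (a - 1) * t * Real.exp (-(w'.re * t)) := by ring
        _ ≤ _ := by gcongr
    · have := integrableOn_rpow_mul_exp_neg_mul_rpow (p := 1) (s := a) (b := w.re / 2) (by linarith) one_pos (by positivity)
      refine this.congr_fun (fun t _ => ?_) measurableSet_Ioi
      simp
    · refine Eventually.of_forall fun t w' _ => ?_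
      have h : HasDerivAt (fun w'' : ℂ => -(w'' * t)) (-(t : ℂ)) w' := by
        have h0 : HasDerivAt (fun w'' : ℂ => w'' * t) (t : ℂ) w' := hasDerivAt_mul_const _
        exact h0.fun_neg
      exact (h.cexp).const_mul _
  have hdiff2 : DifferentiableOn ℂ (fun w : ℂ => (1 / w) ^ (a : ℂ) * Complex.Gamma a)
      {w : ℂ | 0 < w.re} := by
    intro w hw
    have hw' : 0 < w.re := hw
    have hw0 : w ≠ 0 := by rintro rfl; simp at hw'
    refine DifferentiableAt.differentiableWithinAt ?_
    refine (DifferentiableAt.cpow_const (by fun_prop (disch := exact hw0)) ?_).mul_const _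
    left
    rw [one_div, Complex.inv_re]
    exact div_pos hw' (Complex.normSq_pos.2 hw0)
  have hopen : IsOpen {w : ℂ | 0 < w.re} := isOpen_lt continuous_const Complex.continuous_re
  have hconn : IsPreconnected {w : ℂ | 0 < w.re} := (convex_halfSpace_re_gt 0).isPreconnected
  refine (hdiff.analyticOnNhd hopen).eqOn_of_preconnected_of_frequently_eq
    (hdiff2.analyticOnNhd hopen) hconn (z₀ := 1) (by simp) ?_ hz
  have h1 : Tendsto (fun n : ℕ => (1 : ℂ) + ((1 / ((n : ℝ) + 1) : ℝ) : ℂ)) atTop (𝓝[≠] 1) := by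
    refine tendsto_nhdsWithin_iff.2 ⟨?_, Eventually.of_forall fun n => ?_⟩
    · have := (Complex.continuous_ofReal.tendsto 0).comp tendsto_one_div_add_atTop_nhds_zero_nat
      simpa using this.const_add (1 : ℂ)
    · simp only [mem_compl_iff, mem_singleton_iff, add_eq_left, Complex.ofReal_eq_zero]
      positivity
  refine h1.frequently (Frequently.of_forall fun n => ?_)
  have := Complex.integral_cpow_mul_exp_neg_mul_Ioi (a := a) (r := 1 + 1 / ((n : ℝ) + 1)) (by simpa using ha) (by positivity)
  simpa using this

/-- The radial integral `∫₀^∞ r ^ (a - 1) e ^ (-δ r) cos (2π r k) dr` that appears when the regularised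
Fourier transform of a homogeneous kernel is written in polar coordinates (with `a = 2 - s`). -/
def radial (a δ k : ℝ) : ℝ := ∫ r : ℝ in Ioi 0, r ^ (a - 1) * Real.exp (-(δ * r)) * Real.cos (2 * π * (r * k))

/-- The radial integral is the real part of the Laplace transform at `δ + 2π i k`. -/
theorem radial_eq {a δ : ℝ} (ha : 0 < a) (hδ : 0 < δ) (k : ℝ) :
    radial a δ k = Real.Gamma a * ((1 / ((δ : ℂ) + 2 * π * k * Complex.I)) ^ (a : ℂ)).re := by
  have h := gamma_laplace ha (z := (δ : ℂ) + 2 * π * k * Complex.I) (by simpa using hδ)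
  have hint : IntegrableOn (fun t : ℝ => t ^ (a - 1) * Real.exp (-(δ * t))) (Ioi 0) := by
    have := integrableOn_rpow_mul_exp_neg_mul_rpow (p := 1) (s := a - 1) (b := δ) (by linarith) one_pos hδ
    refine this.congr_fun (fun t _ => ?_) measurableSet_Ioi
    simp
  have hi : Integrable (fun t : ℝ => (t : ℂ) ^ ((a : ℂ) - 1) *
      Complex.exp (-(((δ : ℂ) + 2 * π * k * Complex.I) * t))) (volume.restrict (Ioi 0)) := by
    refine Integrable.mono' hint ?_ ?_
    · refine ContinuousOn.aestronglyMeasurable ?_ measurableSet_Ioi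
      refine ContinuousOn.mul ?_ (by fun_prop)
      intro t ht
      exact (Complex.continuousAt_ofReal_cpow_const t _ (Or.inr (ne_of_gt ht))).continuousWithinAt
    · filter_upwards [ae_restrict_mem measurableSet_Ioi] with t ht
      rw [norm_mul, Complex.norm_cpow_eq_rpow_re_of_pos ht, Complex.norm_exp]
      simp
  have h2 := congrArg Complex.re h
  rw [Complex.Gamma_ofReal, Complex.re_mul_ofReal] at h2
  rw [mul_comm (Real.Gamma a), ← h2, ← Complex.reCLM_apply, ← Complex.reCLM.integral_comp_comm hi]
  refine setIntegral_congr_fun measurableSet_Ioi fun t ht => ?_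
  have ht' : (0 : ℝ) < t := ht
  have e1 : (t : ℂ) ^ ((a : ℂ) - 1) = ((t ^ (a - 1) : ℝ) : ℂ) := by
    rw [Complex.ofReal_cpow ht'.le]; simp
  simp only [Complex.reCLM_apply, e1, Complex.re_ofReal_mul]
  rw [Complex.exp_re]
  have e2 : (-(((δ : ℂ) + 2 * π * k * Complex.I) * t)).re = -(δ * t) := by simp
  have e3 : (-(((δ : ℂ) + 2 * π * k * Complex.I) * t)).im = -(2 * π * (t * k)) := by simp; ring
  rw [e2, e3, Real.cos_neg, mul_assoc]

/-- A bound uniform in `δ`, from `|δ + 2π i k| ≥ 2π |k|`. -/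
theorem radial_bound {a δ k : ℝ} (ha : 0 < a) (hδ : 0 < δ) (hk : k ≠ 0) :
    |radial a δ k| ≤ Real.Gamma a * (2 * π * |k|) ^ (-a) := by
  rw [radial_eq ha hδ, abs_mul, abs_of_pos (Real.Gamma_pos_of_pos ha)]
  refine mul_le_mul_of_nonneg_left ?_ (Real.Gamma_pos_of_pos ha).le
  refine (Complex.abs_re_le_norm _).trans ?_
  rw [Complex.norm_cpow_real, norm_div, norm_one, one_div, Real.inv_rpow (norm_nonneg _),
    ← Real.rpow_neg (norm_nonneg _)]
  refine Real.rpow_le_rpow_of_nonpos (by positivity) ?_ (by linarith)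
  have := Complex.abs_im_le_norm ((δ : ℂ) + 2 * π * k * Complex.I)
  simpa [abs_mul, abs_of_pos pi_pos] using this

/-- The limit `δ → 0⁺`: the argument of `1 / (2π i k)` is `∓ π / 2`, which produces the cosine in `tauC`. -/
theorem radial_tendsto {a k : ℝ} (ha : 0 < a) (hk : k ≠ 0) :
    Tendsto (fun δ => radial a δ k) (𝓝[>] 0)
      (𝓝 (Real.Gamma a * ((2 * π * |k|) ^ (-a) * Real.cos (a * π / 2)))) := by
  have hz : (2 * π * k * Complex.I : ℂ) ≠ 0 := by simp [hk, pi_ne_zero]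
  have hval : ((1 / (2 * π * k * Complex.I : ℂ)) ^ (a : ℂ)).re
      = (2 * π * |k|) ^ (-a) * Real.cos (a * π / 2) := by
    rw [Complex.cpow_ofReal_re]
    congr 1
    · rw [norm_div, norm_one, one_div, Real.inv_rpow (norm_nonneg _),
        ← Real.rpow_neg (norm_nonneg _)]
      simp [abs_of_pos pi_pos]
    · have key : Complex.arg (1 / (2 * π * k * Complex.I : ℂ)) = π / 2 ∨
          Complex.arg (1 / (2 * π * k * Complex.I : ℂ)) = -(π / 2) := by
        rcases lt_or_gt_of_ne hk with h | h
        · left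
          have : (1 / (2 * π * k * Complex.I : ℂ)) = ((1 / (2 * π * (-k)) : ℝ) : ℂ) * Complex.I := by
            have hk' : (k : ℂ) ≠ 0 := by exact_mod_cast hk
            have hpi : (π : ℂ) ≠ 0 := by exact_mod_cast pi_ne_zero
            have := Complex.I_sq
            push_cast
            field_simp
            simp
          rw [this, Complex.arg_real_mul _ (by have : 0 < -k := by linarith
                                               positivity), Complex.arg_I]
        · right
          have : (1 / (2 * π * k * Complex.I : ℂ)) = ((1 / (2 * π * k) : ℝ) : ℂ) * (-Complex.I) := by
            have hk' : (k : ℂ) ≠ 0 := by exact_mod_cast hk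
            have hpi : (π : ℂ) ≠ 0 := by exact_mod_cast pi_ne_zero
            push_cast
            field_simp
            simp
          rw [this, Complex.arg_real_mul _ (by positivity), Complex.arg_neg_I]
      rcases key with h | h <;> rw [h]
      · congr 1; ring
      · rw [← Real.cos_neg]; congr 1; ring
  rw [← hval]
  have hcont : ContinuousAt (fun δ : ℝ => Real.Gamma a *
      ((1 / ((δ : ℂ) + 2 * π * k * Complex.I)) ^ (a : ℂ)).re) 0 := by
    refine continuousAt_const.mul (Complex.continuous_re.continuousAt.comp ?_)
    have hslit : (fun δ : ℝ => 1 / ((δ : ℂ) + 2 * π * k * Complex.I)) 0 ∈ Complex.slitPlane := by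
      right
      simp only [Complex.ofReal_zero, zero_add]
      rw [one_div, Complex.inv_im]
      simp [pi_ne_zero, hk]
    refine (continuousAt_cpow_const hslit).comp (f := fun δ : ℝ => 1 / ((δ : ℂ) + 2 * π * k * Complex.I)) ?_
    exact continuousAt_const.div (by fun_prop) (by simpa using hz)
  have := hcont.tendsto
  simp only [Complex.ofReal_zero, zero_add] at this
  refine (this.mono_left nhdsWithin_le_nhds).congr' ?_
  filter_upwards [self_mem_nhdsWithin] with δ hδ
  rw [radial_eq ha hδ]

/-- The integral behind the subordination formula. The substitution `u = q - b / q` maps `(0, ∞)` onto `ℝ`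
and turns the exponent into `-(u ^ 2 + 2 b)`; the non-constant part of the Jacobian is odd. -/
theorem integral_exp_sq_add_div_sq {b : ℝ} (hb : 0 < b) :
    ∫ q : ℝ in Ioi 0, Real.exp (-(q ^ 2 + b ^ 2 / q ^ 2)) = √π / 2 * Real.exp (-(2 * b)) := by
  set f : ℝ → ℝ := fun u => (u + √(u ^ 2 + 4 * b)) / 2 with hf
  set f' : ℝ → ℝ := fun u => (1 + u / √(u ^ 2 + 4 * b)) / 2 with hf'
  have hsq : ∀ u : ℝ, √(u ^ 2 + 4 * b) ^ 2 = u ^ 2 + 4 * b := fun u => Real.sq_sqrt (by positivity)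
  have hpos : ∀ u : ℝ, 0 < √(u ^ 2 + 4 * b) := fun u => Real.sqrt_pos.2 (by positivity)
  have habs : ∀ u : ℝ, |u| < √(u ^ 2 + 4 * b) := fun u => by
    rw [← Real.sqrt_sq_eq_abs]; exact Real.sqrt_lt_sqrt (by positivity) (by linarith)
  have hfpos : ∀ u, 0 < f u := fun u => by
    have := neg_abs_le u
    have := habs u
    simp only [hf]; linarith
  have hfb : ∀ u, f u - b / f u = u := fun u => by
    have h1 := hfpos u
    have h2 : f u ^ 2 - u * f u - b = 0 := by simp only [hf]; nlinarith [hsq u]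
    field_simp
    linarith
  have himg : f '' univ = Ioi 0 := by
    ext q
    simp only [image_univ, mem_range, mem_Ioi]
    constructor
    · rintro ⟨u, rfl⟩; exact hfpos u
    · intro hq
      refine ⟨q - b / q, ?_⟩
      have : (q - b / q) ^ 2 + 4 * b = (q + b / q) ^ 2 := by field_simp; ring
      simp only [hf]
      rw [this, Real.sqrt_sq (by positivity)]
      ring
  have hinj : InjOn f univ := fun x _ y _ h => by
    rw [← hfb x, ← hfb y, h]
  have hder : ∀ u ∈ (univ : Set ℝ), HasDerivWithinAt f (f' u) univ u := fun u _ => by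
    have h1 : HasDerivAt (fun u : ℝ => u ^ 2 + 4 * b) (2 * u) u := by
      simpa using (hasDerivAt_pow 2 u).add_const (4 * b)
    have h2 := ((hasDerivAt_id u).add (h1.sqrt (by positivity))).div_const 2
    have h3 : HasDerivAt f ((1 + 2 * u / (2 * √(u ^ 2 + 4 * b))) / 2) u := h2
    refine (h3.congr_deriv ?_).hasDerivWithinAt
    rw [mul_div_mul_left _ _ two_ne_zero]
  have h := integral_image_eq_integral_abs_deriv_smul MeasurableSet.univ hder hinj
    (fun q => Real.exp (-(q ^ 2 + b ^ 2 / q ^ 2)))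
  rw [himg, setIntegral_univ] at h
  rw [h]
  have hg : Integrable (fun u : ℝ => Real.exp (-u ^ 2)) := by
    simpa using integrable_exp_neg_mul_sq one_pos
  have hg2 : Integrable (fun u : ℝ => u / √(u ^ 2 + 4 * b) * Real.exp (-u ^ 2)) := by
    refine Integrable.mono' hg ?_ (Eventually.of_forall fun u => ?_)
    · exact (Measurable.aestronglyMeasurable (by fun_prop))
    · rw [norm_mul, Real.norm_of_nonneg (Real.exp_pos _).le, norm_div, Real.norm_eq_abs,
        Real.norm_of_nonneg (hpos u).le]
      have : |u| / √(u ^ 2 + 4 * b) ≤ 1 := (div_le_one (hpos u)).2 (habs u).le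
      nlinarith [Real.exp_pos (-u ^ 2)]
  have hodd : ∫ u : ℝ, u / √(u ^ 2 + 4 * b) * Real.exp (-u ^ 2) = 0 := by
    have := integral_neg_eq_self (fun u : ℝ => u / √(u ^ 2 + 4 * b) * Real.exp (-u ^ 2)) volume
    have e : ∀ u : ℝ, -u / √((-u) ^ 2 + 4 * b) * Real.exp (-(-u) ^ 2) =
        -(u / √(u ^ 2 + 4 * b) * Real.exp (-u ^ 2)) := fun u => by
      rw [neg_sq]; ring
    rw [integral_congr_ae (Eventually.of_forall e), integral_neg] at this
    linarith
  have hpt : ∀ u, |f' u| • Real.exp (-(f u ^ 2 + b ^ 2 / f u ^ 2)) =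
      Real.exp (-(2 * b)) / 2 * (Real.exp (-u ^ 2) + u / √(u ^ 2 + 4 * b) * Real.exp (-u ^ 2)) := by
    intro u
    have h1 : 0 ≤ f' u := by
      have h3 : -1 ≤ u / √(u ^ 2 + 4 * b) := by
        rw [le_div_iff₀ (hpos u)]
        linarith [neg_abs_le u, habs u]
      simp only [hf']; linarith
    have h2 : f u ^ 2 + b ^ 2 / f u ^ 2 = u ^ 2 + 2 * b := by
      have := hfpos u
      conv_rhs => rw [← hfb u]
      field_simp
      ring
    rw [abs_of_nonneg h1, h2, smul_eq_mul, neg_add, Real.exp_add]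
    simp only [hf']
    ring
  rw [integral_congr_ae (Eventually.of_forall hpt), integral_const_mul, integral_add hg hg2, hodd]
  have : ∫ u : ℝ, Real.exp (-u ^ 2) = √π := by simpa using integral_gaussian 1
  rw [this]; ring

/-- Near its zeros `|sin|` is bounded below by a multiple of the distance to the zero. -/
theorem sin_rpow_integrable {p : ℝ} (hp : -1 < p) (hp1 : p ≤ 0)  (a b : ℝ):
    IntervalIntegrable (fun x => |Real.sin x| ^ p) volume a b := by
  have hper : Function.Periodic (fun x => |Real.sin x| ^ p) π := fun x => by
    simp [Real.sin_add_pi]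
  refine hper.intervalIntegrable pi_ne_zero (t := 0) ?_ a b
  have h1 : IntervalIntegrable (fun x : ℝ => (2 / π) ^ p * x ^ p) volume 0 (0 + π) :=
    (intervalIntegral.intervalIntegrable_rpow' hp).const_mul _
  have h2 : IntervalIntegrable (fun x : ℝ => (2 / π) ^ p * (π - x) ^ p) volume 0 (0 + π) := by
    have := (intervalIntegral.intervalIntegrable_rpow' (a := 0) (b := π) hp).comp_sub_left π
    simp only [sub_zero, sub_self] at this
    simpa using (this.symm.const_mul ((2 / π) ^ p))
  refine (h1.add h2).mono_fun' (Measurable.aestronglyMeasurable (by fun_prop)) ?_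
  rw [uIoc_of_le (by positivity), zero_add, ← Measure.restrict_congr_set Ioo_ae_eq_Ioc]
  filter_upwards [ae_restrict_mem measurableSet_Ioo] with x hx
  have hx1 := hx.1
  have hx2 : 0 < π - x := by linarith [hx.2]
  have hs : 0 < Real.sin x := Real.sin_pos_of_pos_of_lt_pi hx.1 hx.2
  rw [Real.norm_of_nonneg (by positivity), abs_of_pos hs, ← Real.mul_rpow (by positivity) hx1.le, ← Real.mul_rpow (by positivity) hx2.le]
  rcases le_total x (π / 2) with h | h
  · have := Real.rpow_le_rpow_of_nonpos (by positivity) (Real.mul_le_sin hx1.le h) hp1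
    have : 0 ≤ (2 / π * (π - x)) ^ p := by positivity
    linarith
  · have h3 := Real.mul_le_sin (x := π - x) (by linarith) (by linarith)
    rw [Real.sin_pi_sub] at h3
    have := Real.rpow_le_rpow_of_nonpos (by positivity) h3 hp1
    have : 0 ≤ (2 / π * x) ^ p := by positivity
    linarith

/-- The inversion `t ↦ 1 / t` turns this into the integral defining `Γ((2 - s) / 2)`. -/
theorem cC_integral {s : ℝ} (hs2 : s < 2) :
    ∫ t : ℝ in Ioi 0, t ^ (s / 2 - 1) * (π / t * Real.exp (-(π ^ 2 / t))) =
      π ^ (s - 1) * Real.Gamma ((2 - s) / 2) := by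
  rw [← integral_comp_rpow_Ioi _ (p := -1) (by norm_num)]
  have h := Real.integral_rpow_mul_exp_neg_mul_Ioi (a := (2 - s) / 2) (r := π ^ 2) (by linarith) (by positivity)
  have h2 : π * ((1 / π ^ 2) ^ ((2 - s) / 2)) = π ^ (s - 1) := by
    rw [one_div, Real.inv_rpow (by positivity), ← Real.rpow_natCast, ← Real.rpow_mul pi_pos.le,
      ← Real.rpow_neg pi_pos.le]
    nth_rewrite 1 [← Real.rpow_one π]
    rw [← Real.rpow_add pi_pos]
    congr 1; push_cast; ring
  rw [← h2, mul_assoc, ← h, ← integral_const_mul]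
  refine setIntegral_congr_fun measurableSet_Ioi fun x hx => ?_
  have hx' : (0 : ℝ) < x := hx
  simp only [smul_eq_mul]
  rw [← Real.rpow_mul hx'.le, Real.rpow_neg_one]
  have e : x ^ ((2 - s) / 2 - 1) = x ^ (-1 - 1 : ℝ) * x ^ (-1 * (s / 2 - 1)) * x := by
    rw [← Real.rpow_add hx', ← Real.rpow_add_one hx'.ne']; congr 1; ring
  rw [e]
  simp
  ring

/-! ### The homogeneous kernel -/

/-- The homogeneous kernel `|x| ^ (-s) A(θ(x))` with angular profile `A`. Its value at the origin is
irrelevant for integrals (it is `0` for `s > 0`). -/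
def hk (s : ℝ) (A : ℝ → ℝ) (x : ℝ × ℝ) : ℝ := nrm x ^ (-s) * A (ang x)

theorem nrm_nonneg (x : ℝ × ℝ) : 0 ≤ nrm x := Real.sqrt_nonneg _

theorem nrm_sq (x : ℝ × ℝ) : nrm x ^ 2 = x.1 ^ 2 + x.2 ^ 2 := Real.sq_sqrt (by positivity)

theorem continuous_nrm : Continuous nrm := by unfold nrm; fun_prop

/-- The Euclidean norm dominates the maximum norm, which is the norm Mathlib puts on `ℝ × ℝ`. -/
theorem norm_le_nrm (x : ℝ × ℝ) : ‖x‖ ≤ nrm x := by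
  rw [Prod.norm_def, Real.norm_eq_abs, Real.norm_eq_abs]
  exact max_le (Real.abs_le_sqrt (by nlinarith [sq_nonneg x.2]))
    (Real.abs_le_sqrt (by nlinarith [sq_nonneg x.1]))

theorem nrm_le (x : ℝ × ℝ) : nrm x ≤ 2 * ‖x‖ := by
  have h1 : |x.1| ≤ ‖x‖ := norm_fst_le x
  have h2 : |x.2| ≤ ‖x‖ := norm_snd_le x
  have h := norm_nonneg x
  refine (Real.sqrt_le_left (by positivity)).2 ?_
  nlinarith [sq_abs x.1, sq_abs x.2, abs_nonneg x.1, abs_nonneg x.2]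

theorem nrm_smul {c : ℝ} (hc : 0 ≤ c) (x : ℝ × ℝ) : nrm (c • x) = c * nrm x := by
  unfold nrm
  have : (c • x).1 ^ 2 + (c • x).2 ^ 2 = c ^ 2 * (x.1 ^ 2 + x.2 ^ 2) := by
    simp; ring
  rw [this, Real.sqrt_mul (by positivity), Real.sqrt_sq hc]

theorem ang_smul {c : ℝ} (hc : 0 < c) (x : ℝ × ℝ) : ang (c • x) = ang x := by
  unfold ang
  have : (⟨(c • x).1, (c • x).2⟩ : ℂ) = (c : ℂ) * ⟨x.1, x.2⟩ := by
    apply Complex.ext <;> simp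
  rw [this, Complex.arg_real_mul _ hc]

theorem measurable_ang : Measurable ang := by
  have h : Measurable (fun x : ℝ × ℝ => Complex.arg ⟨x.1, x.2⟩) :=
    Complex.measurable_arg.comp Complex.measurableEquivRealProd.symm.measurable
  exact Measurable.ite (h (measurableSet_singleton π)) measurable_const h

theorem measurable_hk {s : ℝ} {A : ℝ → ℝ} (hA : Measurable A) : Measurable (hk s A) :=
  (continuous_nrm.measurable.pow_const _).mul (hA.comp measurable_ang)

theorem hk_smul {s c : ℝ} (hc : 0 < c) (A : ℝ → ℝ) (x : ℝ × ℝ) :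
    hk s A (c • x) = c ^ (-s) * hk s A x := by
  unfold hk
  rw [nrm_smul hc.le, ang_smul hc, Real.mul_rpow hc.le (nrm_nonneg x), mul_assoc]

theorem nrm_rpow_le {s : ℝ} (hs0 : 0 < s) (x : ℝ × ℝ) : nrm x ^ (-s) ≤ ‖x‖ ^ (-s) := by
  rcases eq_or_ne x 0 with rfl | hx
  · simp [nrm]
  · exact Real.rpow_le_rpow_of_nonpos (norm_pos_iff.2 hx) (norm_le_nrm x) (by linarith)

theorem abs_hk_le {s M : ℝ} (hs0 : 0 < s) {A : ℝ → ℝ} (hM : ∀ θ, |A θ| ≤ M) (x : ℝ × ℝ) :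
    |hk s A x| ≤ M * ‖x‖ ^ (-s) := by
  have hM0 : 0 ≤ M := (abs_nonneg _).trans (hM 0)
  unfold hk
  have h0 : 0 ≤ nrm x ^ (-s) := Real.rpow_nonneg (nrm_nonneg x) _
  rw [abs_mul, abs_of_nonneg h0, mul_comm]
  exact mul_le_mul (hM _) (nrm_rpow_le hs0 x) h0 hM0

theorem integrable_rpow_exp {s δ : ℝ} (hs2 : s < 2) (hδ : 0 < δ) :
    Integrable (fun x : ℝ × ℝ => ‖x‖ ^ (-s) * Real.exp (-(δ * ‖x‖))) := by
  refine (integrable_fun_norm_addHaar (E := ℝ × ℝ) volume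
    (f := fun r => r ^ (-s) * Real.exp (-(δ * r)))).2 ?_
  have := integrableOn_rpow_mul_exp_neg_mul_rpow (p := 1) (s := 1 - s) (b := δ) (by linarith)
    one_pos hδ
  refine this.congr_fun (fun t ht => ?_) measurableSet_Ioi
  have ht' : (0 : ℝ) < t := ht
  have e : t ^ (1 - s) = t * t ^ (-s) := by
    rw [sub_eq_add_neg, Real.rpow_add ht', Real.rpow_one]
  simp [e, mul_assoc]

theorem integrable_hk_exp {s δ M : ℝ} (hs0 : 0 < s) (hs2 : s < 2) (hδ : 0 < δ) {A : ℝ → ℝ}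
    (hA : Measurable A) (hM : ∀ θ, |A θ| ≤ M) :
    Integrable (fun x : ℝ × ℝ => hk s A x * Real.exp (-(δ * nrm x))) := by
  refine Integrable.mono' ((integrable_rpow_exp hs2 hδ).const_mul M) ?_
    (Eventually.of_forall fun x => ?_)
  · have := (measurable_hk (s := s) hA)
    have := continuous_nrm.measurable
    exact Measurable.aestronglyMeasurable (by fun_prop)
  · rw [norm_mul, Real.norm_of_nonneg (Real.exp_pos _).le, Real.norm_eq_abs, ← mul_assoc]
    have h1 : Real.exp (-(δ * nrm x)) ≤ Real.exp (-(δ * ‖x‖)) := by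
      have := norm_le_nrm x
      gcongr
    exact mul_le_mul (abs_hk_le hs0 hM x) h1 (Real.exp_pos _).le
      ((abs_nonneg _).trans (abs_hk_le hs0 hM x))

theorem integrable_hk_gauss {s u M : ℝ} (hs0 : 0 < s) (hs2 : s < 2) (hu : 0 < u) {A : ℝ → ℝ}
    (hA : Measurable A) (hM : ∀ θ, |A θ| ≤ M) :
    Integrable (fun x : ℝ × ℝ => hk s A x * Real.exp (-(u * nrm x ^ 2))) := by
  refine Integrable.mono' ((integrable_hk_exp hs0 hs2 one_pos hA hM).norm.const_mul
    (Real.exp (1 / (4 * u)))) ?_ (Eventually.of_forall fun x => ?_)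
  · have := (measurable_hk (s := s) hA)
    have := continuous_nrm.measurable
    exact Measurable.aestronglyMeasurable (by fun_prop)
  · rw [norm_mul, norm_mul, Real.norm_of_nonneg (Real.exp_pos _).le,
      Real.norm_of_nonneg (Real.exp_pos _).le, mul_left_comm, ← Real.exp_add]
    gcongr
    have : 0 ≤ u * (nrm x - 1 / (2 * u)) ^ 2 := by positivity
    have e : u * (nrm x - 1 / (2 * u)) ^ 2 = u * nrm x ^ 2 - nrm x + 1 / (4 * u) := by
      field_simp; ring
    linarith

/-- The kernel is dominated by an integrable function plus a constant, so that convolving it with an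
integrable density gives bounded and integrable pieces. -/
theorem abs_hk_le' {s M : ℝ} (hs0 : 0 < s) {A : ℝ → ℝ} (hM : ∀ θ, |A θ| ≤ M) (x : ℝ × ℝ) :
    |hk s A x| ≤ M * (Real.exp 1 * (‖x‖ ^ (-s) * Real.exp (-(1 * ‖x‖))) + 1) := by
  have hM0 : 0 ≤ M := (abs_nonneg _).trans (hM 0)
  refine (abs_hk_le hs0 hM x).trans (mul_le_mul_of_nonneg_left ?_ hM0)
  have h0 : 0 ≤ ‖x‖ ^ (-s) := Real.rpow_nonneg (norm_nonneg x) _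
  rcases le_total ‖x‖ 1 with h | h
  · have : 1 ≤ Real.exp 1 * Real.exp (-(1 * ‖x‖)) := by
      rw [← Real.exp_add]; exact Real.one_le_exp (by linarith)
    nlinarith
  · have : ‖x‖ ^ (-s) ≤ 1 := Real.rpow_le_one_of_one_le_of_nonpos h (by linarith)
    have : 0 ≤ Real.exp 1 * (‖x‖ ^ (-s) * Real.exp (-(1 * ‖x‖))) := by positivity
    linarith

/-- The double integral in the quadratic form converges absolutely for integrable densities, one of which
is bounded. -/
theorem integrable_pair {s M C : ℝ} (hs0 : 0 < s) (hs2 : s < 2) {A : ℝ → ℝ}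
    (hA : Measurable A) (hM : ∀ θ, |A θ| ≤ M) {f g : ℝ × ℝ → ℝ} (hf : Integrable f)
    (hg : Integrable g) (hgC : ∀ x, |g x| ≤ C) :
    Integrable (fun p : (ℝ × ℝ) × (ℝ × ℝ) => hk s A (p.1 - p.2) * (f p.2 * g p.1)) := by
  have h1 : Integrable (fun p : (ℝ × ℝ) × (ℝ × ℝ) =>
      f p.2 * (‖p.1 - p.2‖ ^ (-s) * Real.exp (-(1 * ‖p.1 - p.2‖)))) :=
    Integrable.convolution_integrand (ContinuousLinearMap.mul ℝ ℝ) hf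
      (integrable_rpow_exp hs2 one_pos)
  have h2 : Integrable (fun p : (ℝ × ℝ) × (ℝ × ℝ) => g p.1 * f p.2) := hg.mul_prod hf
  refine Integrable.mono' (((h1.norm.const_mul (M * Real.exp 1 * C))).add (h2.norm.const_mul M)) ?_
    (Eventually.of_forall fun p => ?_)
  · refine ((measurable_hk hA).comp (measurable_fst.sub measurable_snd)).aestronglyMeasurable.mul ?_
    refine h2.aestronglyMeasurable.congr (Eventually.of_forall fun p => mul_comm _ _)
  · simp only [Pi.add_apply, norm_mul, Real.norm_eq_abs, Real.abs_exp]
    have e := abs_hk_le' hs0 hM (p.1 - p.2)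
    have hC : |g p.1| ≤ C := hgC _
    have hM0 : 0 ≤ M := (abs_nonneg _).trans (hM 0)
    have hr : |‖p.1 - p.2‖ ^ (-s)| = ‖p.1 - p.2‖ ^ (-s) :=
      abs_of_nonneg (Real.rpow_nonneg (norm_nonneg _) _)
    rw [hr]
    set N := ‖p.1 - p.2‖ ^ (-s) * Real.exp (-(1 * ‖p.1 - p.2‖))
    have hN : 0 ≤ N := by positivity
    calc |hk s A (p.1 - p.2)| * (|f p.2| * |g p.1|)
        ≤ (M * (Real.exp 1 * N + 1)) * (|f p.2| * |g p.1|) := by gcongr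
      _ = M * Real.exp 1 * |g p.1| * (|f p.2| * N) + M * (|g p.1| * |f p.2|) := by ring
      _ ≤ _ := by gcongr

/-! ### Positivity of the quadratic form of the homogeneous kernel -/

/-- The bilinear form `∬ k(x - y) f(y) g(x) dy dx` of the homogeneous kernel `k = hk s A`. -/
def Q (s : ℝ) (A : ℝ → ℝ) (f g : ℝ × ℝ → ℝ) : ℝ :=
  ∫ p : (ℝ × ℝ) × (ℝ × ℝ), hk s A (p.1 - p.2) * (f p.2 * g p.1)

theorem integrable_of_bounded {f : ℝ × ℝ → ℝ} {C R : ℝ} (hf : Measurable f)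
    (hC : ∀ x, |f x| ≤ C) (hR : ∀ x, R < ‖x‖ → f x = 0) : Integrable f := by
  have h : IntegrableOn f (Metric.closedBall 0 R) :=
    Measure.integrableOn_of_bounded (M := C)
      ((isCompact_closedBall (0 : ℝ × ℝ) R).measure_lt_top.ne) hf.aestronglyMeasurable
      (Eventually.of_forall fun x => by simpa using hC x)
  refine (integrableOn_iff_integrable_of_support_subset fun x hx => ?_).1 h
  simp only [mem_closedBall_zero_iff]
  by_contra hlt
  exact hx (hR x (not_le.1 hlt))

theorem integrable_weight {f : ℝ × ℝ → ℝ} {C R : ℝ} (hf : Measurable f)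
    (hC : ∀ x, |f x| ≤ C) (hR : ∀ x, R < ‖x‖ → f x = 0) {w : ℝ × ℝ → ℝ} (hw : Continuous w) :
    Integrable (fun x => w x * f x) := by
  obtain ⟨B, hB⟩ := (isCompact_closedBall (0 : ℝ × ℝ) R).exists_bound_of_continuousOn
    hw.continuousOn
  refine integrable_of_bounded (C := max B 0 * C) (R := R) (hw.measurable.mul hf) (fun x => ?_)
    (fun x hx => by rw [hR x hx, mul_zero])
  rw [abs_mul]
  rcases le_or_gt ‖x‖ R with h | h
  · have := hB x (by simpa using h)
    exact mul_le_mul (this.trans (le_max_left _ _)) (hC x) (abs_nonneg _) (le_max_right _ _)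
  · rw [hR x h, abs_zero, mul_zero]
    exact mul_nonneg (le_max_right _ _) ((abs_nonneg _).trans (hC 0))

/-- For a mean-zero density the quadratic confinement contributes `-|∫ x μ|² ≤ 0`. -/
theorem energyR_le {s M : ℝ} (hs0 : 0 < s) (hs2 : s < 2) {A : ℝ → ℝ}
    (hA : Measurable A) (hM : ∀ θ, |A θ| ≤ M) {f : ℝ × ℝ → ℝ} {C R : ℝ} (hf : Measurable f)
    (hC : ∀ x, |f x| ≤ C) (hR : ∀ x, R < ‖x‖ → f x = 0) (h0 : ∫ x, f x = 0) :
    energyR s A f ≤ 1 / 2 * Q s A f f := by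
  have i0 := integrable_of_bounded hf hC hR
  have i1 := integrable_weight hf hC hR continuous_fst
  have i2 := integrable_weight hf hC hR continuous_snd
  have i3 : Integrable (fun x => nrm x ^ 2 * f x) :=
    integrable_weight hf hC hR (continuous_nrm.pow 2)
  have j0 := integrable_pair hs0 hs2 hA hM i0 i0 hC
  have j1 : Integrable (fun p : (ℝ × ℝ) × (ℝ × ℝ) => (nrm p.1 ^ 2 * f p.1) * f p.2) :=
    i3.mul_prod i0
  have j2 : Integrable (fun p : (ℝ × ℝ) × (ℝ × ℝ) => f p.1 * (nrm p.2 ^ 2 * f p.2)) :=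
    i0.mul_prod i3
  have j3 : Integrable (fun p : (ℝ × ℝ) × (ℝ × ℝ) => (p.1.1 * f p.1) * (p.2.1 * f p.2)) :=
    i1.mul_prod i1
  have j4 : Integrable (fun p : (ℝ × ℝ) × (ℝ × ℝ) => (p.1.2 * f p.1) * (p.2.2 * f p.2)) :=
    i2.mul_prod i2
  have hpt : ∀ p : (ℝ × ℝ) × (ℝ × ℝ), Wr s A (p.1 - p.2) * f p.2 * f p.1 =
      hk s A (p.1 - p.2) * (f p.2 * f p.1) + (((nrm p.1 ^ 2 * f p.1) * f p.2 +
        f p.1 * (nrm p.2 ^ 2 * f p.2)) - (2 * ((p.1.1 * f p.1) * (p.2.1 * f p.2)) +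
        2 * ((p.1.2 * f p.1) * (p.2.2 * f p.2)))) := by
    intro p
    unfold Wr
    rw [nrm_sq, nrm_sq, nrm_sq]
    simp only [Prod.fst_sub, Prod.snd_sub, hk]
    ring
  have j12 : Integrable (fun p : (ℝ × ℝ) × (ℝ × ℝ) =>
      (nrm p.1 ^ 2 * f p.1) * f p.2 + f p.1 * (nrm p.2 ^ 2 * f p.2)) := j1.add j2
  have j34 : Integrable (fun p : (ℝ × ℝ) × (ℝ × ℝ) =>
      2 * ((p.1.1 * f p.1) * (p.2.1 * f p.2)) + 2 * ((p.1.2 * f p.1) * (p.2.2 * f p.2))) :=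
    (j3.const_mul 2).add (j4.const_mul 2)
  have hq : Integrable (fun p : (ℝ × ℝ) × (ℝ × ℝ) => ((nrm p.1 ^ 2 * f p.1) * f p.2 +
        f p.1 * (nrm p.2 ^ 2 * f p.2)) - (2 * ((p.1.1 * f p.1) * (p.2.1 * f p.2)) +
        2 * ((p.1.2 * f p.1) * (p.2.2 * f p.2)))) := j12.sub j34
  have hall : Integrable (fun p : (ℝ × ℝ) × (ℝ × ℝ) => Wr s A (p.1 - p.2) * f p.2 * f p.1) :=
    (j0.add hq).congr (Eventually.of_forall fun p => (hpt p).symm)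
  have e1 : ∫ x : ℝ × ℝ, (∫ y : ℝ × ℝ, Wr s A (x - y) * f y) * f x =
      ∫ p : (ℝ × ℝ) × (ℝ × ℝ), Wr s A (p.1 - p.2) * f p.2 * f p.1 := by
    refine Eq.trans ?_ (integral_prod _ hall).symm
    simp_rw [integral_mul_const]
  have e2 : ∫ p : (ℝ × ℝ) × (ℝ × ℝ), Wr s A (p.1 - p.2) * f p.2 * f p.1 =
      Q s A f f - 2 * (∫ x : ℝ × ℝ, x.1 * f x) ^ 2 - 2 * (∫ x : ℝ × ℝ, x.2 * f x) ^ 2 := by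
    rw [integral_congr_ae (Eventually.of_forall hpt), integral_add j0 hq]
    have e3 : ∫ p : (ℝ × ℝ) × (ℝ × ℝ), (((nrm p.1 ^ 2 * f p.1) * f p.2 +
        f p.1 * (nrm p.2 ^ 2 * f p.2)) - (2 * ((p.1.1 * f p.1) * (p.2.1 * f p.2)) +
        2 * ((p.1.2 * f p.1) * (p.2.2 * f p.2)))) =
        ((∫ x : ℝ × ℝ, nrm x ^ 2 * f x) * (∫ x : ℝ × ℝ, f x) +
          (∫ x : ℝ × ℝ, f x) * (∫ x : ℝ × ℝ, nrm x ^ 2 * f x)) -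
        (2 * ((∫ x : ℝ × ℝ, x.1 * f x) * (∫ x : ℝ × ℝ, x.1 * f x)) +
          2 * ((∫ x : ℝ × ℝ, x.2 * f x) * (∫ x : ℝ × ℝ, x.2 * f x))) := by
      rw [integral_sub j12 j34, integral_add j1 j2, integral_add (j3.const_mul 2) (j4.const_mul 2),
        integral_const_mul, integral_const_mul, ← integral_prod_mul, ← integral_prod_mul,
        ← integral_prod_mul, ← integral_prod_mul]
      rfl
    rw [e3, h0]
    unfold Q
    ring
  unfold energyR
  rw [e1, e2]
  nlinarith [sq_nonneg (∫ x : ℝ × ℝ, x.1 * f x), sq_nonneg (∫ x : ℝ × ℝ, x.2 * f x)]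

/-- By homogeneity of the kernel, dilating a density multiplies its energy by a positive constant. -/
theorem Q_scale {s c : ℝ} (hc : 0 < c) (A : ℝ → ℝ) (f : ℝ × ℝ → ℝ) :
    ∃ k : ℝ, 0 < k ∧ Q s A (fun x => f (c • x)) (fun x => f (c • x)) = k * Q s A f f := by
  have : (volume : Measure ((ℝ × ℝ) × (ℝ × ℝ))).IsAddHaarMeasure :=
    Measure.prod.instIsAddHaarMeasure volume volume
  have h := Measure.integral_comp_smul (volume : Measure ((ℝ × ℝ) × (ℝ × ℝ)))
    (fun p => hk s A (p.1 - p.2) * (f p.2 * f p.1)) c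
  refine ⟨c ^ s * |(c ^ Module.finrank ℝ ((ℝ × ℝ) × (ℝ × ℝ)))⁻¹|, by positivity, ?_⟩
  rw [mul_assoc, Q, Q, ← smul_eq_mul (a := |_|), ← h, ← integral_const_mul]
  refine integral_congr_ae (Eventually.of_forall fun p => ?_)
  simp only [Prod.smul_fst, Prod.smul_snd, ← smul_sub, hk_smul hc]
  rw [Real.rpow_neg hc.le]
  have := (Real.rpow_pos_of_pos hc s).ne'
  field_simp

/-- Subtracting from `f` a copy of itself translated by `a` gives a mean-zero density whose energy is twice
that of `f`, up to an interaction term that decays like `|a| ^ (-s)`. -/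
theorem Q_far {s M : ℝ} (hs0 : 0 < s) (hs2 : s < 2) {A : ℝ → ℝ}
    (hA : Measurable A) (hM : ∀ θ, |A θ| ≤ M) {f : ℝ × ℝ → ℝ} {C R : ℝ} (hf : Measurable f)
    (hC : ∀ x, |f x| ≤ C) (hR : ∀ x, R < ‖x‖ → f x = 0) (a : ℝ × ℝ) (ha : 2 * R < ‖a‖) :
    Q s A (fun x => f x - f (x - a)) (fun x => f x - f (x - a)) ≤
      2 * Q s A f f + 2 * (M * (‖a‖ - 2 * R) ^ (-s) * ((∫ x, |f x|) * ∫ x, |f x|)) := by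
  have hM0 : 0 ≤ M := (abs_nonneg _).trans (hM 0)
  have i0 := integrable_of_bounded hf hC hR
  have ia : Integrable (fun x => f (x - a)) := i0.comp_sub_right a
  have hCa : ∀ x, |f (x - a)| ≤ C := fun x => hC _
  have j1 := integrable_pair hs0 hs2 hA hM i0 i0 hC
  have j2 := integrable_pair hs0 hs2 hA hM ia ia hCa
  have j3 := integrable_pair hs0 hs2 hA hM ia i0 hC
  have j4 := integrable_pair hs0 hs2 hA hM i0 ia hCa
  have e : Q s A (fun x => f x - f (x - a)) (fun x => f x - f (x - a)) =
      (Q s A f f + Q s A (fun x => f (x - a)) (fun x => f (x - a))) -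
      (Q s A (fun x => f (x - a)) f + Q s A f (fun x => f (x - a))) := by
    unfold Q
    rw [← integral_add j1 j2, ← integral_add j3 j4, ← integral_sub]
    · refine integral_congr_ae (Eventually.of_forall fun p => ?_)
      ring
    · exact j1.add j2
    · exact j3.add j4
  have e2 : Q s A (fun x => f (x - a)) (fun x => f (x - a)) = Q s A f f := by
    unfold Q
    have : (volume : Measure ((ℝ × ℝ) × (ℝ × ℝ))).IsAddHaarMeasure :=
      Measure.prod.instIsAddHaarMeasure volume volume
    rw [← integral_sub_right_eq_self (μ := (volume : Measure ((ℝ × ℝ) × (ℝ × ℝ))))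
      (fun p => hk s A (p.1 - p.2) * (f p.2 * f p.1)) (a, a)]
    refine integral_congr_ae (Eventually.of_forall fun p => ?_)
    simp
  have hdec : ∀ v : ℝ × ℝ, ‖a‖ - 2 * R ≤ ‖v‖ → |hk s A v| ≤ M * (‖a‖ - 2 * R) ^ (-s) := by
    intro v hv
    refine (abs_hk_le hs0 hM v).trans ?_
    gcongr 1
    exact Real.rpow_le_rpow_of_nonpos (by linarith) hv (by linarith)
  have hsupp : ∀ x, f x ≠ 0 → ‖x‖ ≤ R := fun x hx => not_lt.1 fun h => hx (hR x h)
  have bound : ∀ x y, f x ≠ 0 → f (y - a) ≠ 0 → ‖a‖ - 2 * R ≤ ‖x - y‖ := by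
    intro x y hx hy
    have h1 := hsupp _ hx
    have h2 := hsupp _ hy
    have h3 : ‖a‖ ≤ ‖x‖ + ‖y - a‖ + ‖x - y‖ := by
      have : a = x - (y - a) - (x - y) := by abel
      calc ‖a‖ = ‖x - (y - a) - (x - y)‖ := by rw [← this]
        _ ≤ ‖x - (y - a)‖ + ‖x - y‖ := norm_sub_le _ _
        _ ≤ _ := by gcongr; exact norm_sub_le _ _
    linarith
  have hsh : ∫ x, |f (x - a)| = ∫ x, |f x| :=
    integral_sub_right_eq_self (fun x => |f x|) a
  have c3 : |Q s A (fun x => f (x - a)) f| ≤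
      M * (‖a‖ - 2 * R) ^ (-s) * ((∫ x, |f x|) * ∫ x, |f x|) := by
    unfold Q
    nth_rewrite 2 [← hsh]
    rw [← integral_prod_mul, ← integral_const_mul, ← Real.norm_eq_abs]
    refine norm_integral_le_of_norm_le ((i0.abs.mul_prod ia.abs).const_mul _)
      (Eventually.of_forall fun p => ?_)
    simp only [norm_mul, Real.norm_eq_abs]
    by_cases h1 : f p.1 = 0
    · simp [h1]
    by_cases h2 : f (p.2 - a) = 0
    · simp [h2]
    rw [mul_comm |f (p.2 - a)|]
    exact mul_le_mul_of_nonneg_right (hdec _ (bound _ _ h1 h2)) (by positivity)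
  have c4 : |Q s A f (fun x => f (x - a))| ≤
      M * (‖a‖ - 2 * R) ^ (-s) * ((∫ x, |f x|) * ∫ x, |f x|) := by
    unfold Q
    nth_rewrite 1 [← hsh]
    rw [← integral_prod_mul, ← integral_const_mul, ← Real.norm_eq_abs]
    refine norm_integral_le_of_norm_le ((ia.abs.mul_prod i0.abs).const_mul _)
      (Eventually.of_forall fun p => ?_)
    simp only [norm_mul, Real.norm_eq_abs]
    by_cases h1 : f p.2 = 0
    · simp [h1]
    by_cases h2 : f (p.1 - a) = 0
    · simp [h2]
    rw [mul_comm |f p.2|]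
    refine mul_le_mul_of_nonneg_right (hdec _ ?_) (by positivity)
    rw [norm_sub_rev]
    exact bound _ _ h1 h2
  rw [e, e2]
  have := neg_abs_le (Q s A (fun x => f (x - a)) f)
  have := neg_abs_le (Q s A f (fun x => f (x - a)))
  linarith

section Positivity

variable {s M ε : ℝ} {A : ℝ → ℝ}

/-- The negation of the conclusion of the theorem: bounded mean-zero densities supported in the ball of
radius `ε` have nonnegative energy. -/
def EnergyNonneg (s : ℝ) (A : ℝ → ℝ) (ε : ℝ) : Prop :=
  ∀ μ : ℝ × ℝ → ℝ, Measurable μ → (∃ M : ℝ, ∀ x, |μ x| ≤ M) →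
    Function.support μ ⊆ {x : ℝ × ℝ | nrm x ≤ ε} → (∫ x : ℝ × ℝ, μ x) = 0 → 0 ≤ energyR s A μ

/-- A mean-zero density of any compact support is shrunk into the ball of radius `ε` by a dilation; there
`energyR_le` compares the form with the energy. -/
theorem Q_nonneg_meanZero (hs0 : 0 < s) (hs2 : s < 2) (hε : 0 < ε) (hA : Measurable A)
    (hM : ∀ θ, |A θ| ≤ M) (H : EnergyNonneg s A ε) {f : ℝ × ℝ → ℝ} {C R : ℝ} (hR0 : 0 < R)
    (hf : Measurable f) (hC : ∀ x, |f x| ≤ C) (hR : ∀ x, R < ‖x‖ → f x = 0)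
    (h0 : ∫ x, f x = 0) : 0 ≤ Q s A f f := by
  set c : ℝ := 2 * R / ε with hc
  have hcpos : 0 < c := by positivity
  have hmeas : Measurable (fun x : ℝ × ℝ => f (c • x)) := hf.comp (measurable_const_smul c)
  have hz : ∀ x, ε / 2 < ‖x‖ → f (c • x) = 0 := by
    intro x hx
    refine hR _ ?_
    rw [norm_smul, Real.norm_of_nonneg hcpos.le, hc, div_mul_eq_mul_div, lt_div_iff₀ hε]
    nlinarith
  have hm0 : ∫ x, f (c • x) = 0 := by
    rw [Measure.integral_comp_smul, h0, smul_zero]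
  have hE := H (fun x => f (c • x)) hmeas ⟨C, fun x => hC _⟩ (fun x hx => by
    have : ‖x‖ ≤ ε / 2 := not_lt.1 fun h => hx (hz x h)
    have := nrm_le x
    simp only [Set.mem_ofPred_eq]; linarith) hm0
  have hle := energyR_le hs0 hs2 hA hM hmeas (fun x => hC _) hz hm0
  obtain ⟨k, hk0, hk⟩ := Q_scale (s := s) hcpos A f
  rw [hk] at hle
  by_contra hneg
  push Not at hneg
  nlinarith [mul_neg_of_pos_of_neg hk0 hneg]

/-- The mean-zero condition is removed by sending a negative copy of the density to infinity. -/
theorem Q_nonneg_compact (hs0 : 0 < s) (hs2 : s < 2) (hε : 0 < ε) (hA : Measurable A)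
    (hM : ∀ θ, |A θ| ≤ M) (H : EnergyNonneg s A ε) {f : ℝ × ℝ → ℝ} {C R : ℝ} (hR0 : 0 < R)
    (hf : Measurable f) (hC : ∀ x, |f x| ≤ C) (hR : ∀ x, R < ‖x‖ → f x = 0) :
    0 ≤ Q s A f f := by
  set L := (∫ x, |f x|) * ∫ x, |f x| with hL
  have key : ∀ t : ℝ, 0 < t → 0 ≤ 2 * Q s A f f + 2 * (M * t ^ (-s) * L) := by
    intro t ht
    set a : ℝ × ℝ := (t + 2 * R, 0) with ha
    have hna : ‖a‖ = t + 2 * R := by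
      rw [ha, Prod.norm_def]; simp [abs_of_pos (show 0 < t + 2 * R by positivity)]; positivity
    have h1 := Q_far hs0 hs2 hA hM hf hC hR a (by rw [hna]; linarith)
    rw [hna, add_sub_cancel_right] at h1
    refine le_trans ?_ h1
    have i0 := integrable_of_bounded hf hC hR
    refine Q_nonneg_meanZero hs0 hs2 hε hA hM H (C := C + C) (R := t + 3 * R) (by positivity)
      (hf.sub (hf.comp (measurable_id.sub_const a))) (fun x => ?_) (fun x hx => ?_) ?_
    · exact (abs_sub _ _).trans (add_le_add (hC _) (hC _))
    · have h2 : ‖x‖ ≤ ‖x - a‖ + ‖a‖ := by simpa using norm_add_le (x - a) a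
      show f x - f (x - a) = 0
      rw [hR x (by linarith), hR (x - a) (by linarith), sub_zero]
    · show ∫ x, (f x - f (x - a)) = 0
      rw [integral_sub i0 (i0.comp_sub_right a), integral_sub_right_eq_self f a, sub_self]
  have hlim : Tendsto (fun t : ℝ => 2 * Q s A f f + 2 * (M * t ^ (-s) * L)) atTop
      (𝓝 (2 * Q s A f f + 2 * (M * 0 * L))) :=
    (((tendsto_rpow_neg_atTop hs0).const_mul M).mul_const L).const_mul 2 |>.const_add _
  have := ge_of_tendsto hlim ((eventually_gt_atTop 0).mono key)
  linarith

/-- Compact support is removed by truncation and dominated convergence. -/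
theorem Q_nonneg (hs0 : 0 < s) (hs2 : s < 2) (hε : 0 < ε) (hA : Measurable A)
    (hM : ∀ θ, |A θ| ≤ M) (H : EnergyNonneg s A ε) {f : ℝ × ℝ → ℝ} {C : ℝ}
    (hf : Measurable f) (hC : ∀ x, |f x| ≤ C) (hi : Integrable f) : 0 ≤ Q s A f f := by
  have j := integrable_pair hs0 hs2 hA hM hi hi hC
  let F : ℕ → ℝ × ℝ → ℝ := fun n => (Metric.closedBall 0 ((n : ℝ) + 1)).indicator f
  have hFm : ∀ n, Measurable (F n) := fun n => hf.indicator Metric.isClosed_closedBall.measurableSet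
  have hFle : ∀ n x, |F n x| ≤ |f x| := fun n x => by
    simpa using norm_indicator_le_norm_self (s := Metric.closedBall (0 : ℝ × ℝ) ((n : ℝ) + 1)) f x
  have hpos : ∀ n, 0 ≤ Q s A (F n) (F n) := fun n => by
    refine Q_nonneg_compact hs0 hs2 hε hA hM H (C := C) (R := (n : ℝ) + 1) (by positivity)
      (hFm n) (fun x => (hFle n x).trans (hC x)) (fun x hx => ?_)
    exact indicator_of_notMem (by simpa using hx) _
  have hFt : ∀ x, ∀ᶠ n in atTop, F n x = f x := fun x => by
    filter_upwards [eventually_ge_atTop ⌈‖x‖⌉₊] with n hn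
    refine indicator_of_mem ?_ _
    have := (Nat.le_ceil ‖x‖).trans (Nat.cast_le.2 hn)
    simp only [mem_closedBall_zero_iff]; linarith
  have hlim : Tendsto (fun n => Q s A (F n) (F n)) atTop (𝓝 (Q s A f f)) := by
    refine tendsto_integral_of_dominated_convergence _ (fun n => ?_) j.norm
      (fun n => Eventually.of_forall fun p => ?_) (Eventually.of_forall fun p => ?_)
    · exact (((measurable_hk hA).comp (measurable_fst.sub measurable_snd)).mul
        (((hFm n).comp measurable_snd).mul ((hFm n).comp measurable_fst))).aestronglyMeasurable
    · simp only [norm_mul, Real.norm_eq_abs]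
      exact mul_le_mul_of_nonneg_left
        (mul_le_mul (hFle n _) (hFle n _) (abs_nonneg _) (abs_nonneg _)) (abs_nonneg _)
    · refine tendsto_const_nhds.congr' ?_
      filter_upwards [hFt p.1, hFt p.2] with n h1 h2
      rw [h1, h2]
  exact ge_of_tendsto' hlim hpos

end Positivity

/-! ### Gaussian wave packets -/

/-- The phase `2π x · e_φ` of a plane wave with unit frequency in the direction `φ`. -/
def phase (φ : ℝ) (x : ℝ × ℝ) : ℝ := 2 * π * (x.1 * Real.cos φ + x.2 * Real.sin φ)

/-- The Fourier transform at the frequency `e_φ` of the kernel regularised by the Gaussian `e ^ (-u |x|²)`.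
For an even kernel, as is the case when `A` is `π`-periodic, the sine part vanishes. -/
def G (s : ℝ) (A : ℝ → ℝ) (φ u : ℝ) : ℝ :=
  ∫ x : ℝ × ℝ, hk s A x * Real.exp (-(u * nrm x ^ 2)) * Real.cos (phase φ x)

theorem continuous_phase (φ : ℝ) : Continuous (phase φ) := by unfold phase; fun_prop

theorem phase_sub (φ : ℝ) (x y : ℝ × ℝ) : phase φ (x - y) = phase φ x - phase φ y := by
  unfold phase; simp only [Prod.fst_sub, Prod.snd_sub]; ring

theorem integrable_gauss {u : ℝ} (hu : 0 < u) :
    Integrable (fun x : ℝ × ℝ => Real.exp (-(u * nrm x ^ 2))) := by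
  have h := (integrable_exp_neg_mul_sq hu).mul_prod (integrable_exp_neg_mul_sq hu)
  refine h.congr (Eventually.of_forall fun x => ?_)
  simp only [nrm_sq, ← Real.exp_add]
  ring_nf

theorem gauss_pos {u : ℝ} (hu : 0 < u) : 0 < ∫ x : ℝ × ℝ, Real.exp (-(u * nrm x ^ 2)) :=
  integral_exp_pos (integrable_gauss hu)

/-- The energies of the two real wave packets `e ^ (-u |x|²) cos` and `e ^ (-u |x|²) sin` add up to a positive
multiple of `G s A φ (u / 2)`: the trigonometric factors combine to `cos (phase φ (x - y))`, and
`u |x|² + u |y|² = (u / 2) |x - y|² + 2 u |y + (x - y) / 2|²`. -/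
theorem wave_packet {s M u : ℝ} (hs0 : 0 < s) (hs2 : s < 2) {A : ℝ → ℝ} (hA : Measurable A)
    (hM : ∀ θ, |A θ| ≤ M) (φ : ℝ) (hu : 0 < u) :
    Q s A (fun x => Real.exp (-(u * nrm x ^ 2)) * Real.cos (phase φ x))
        (fun x => Real.exp (-(u * nrm x ^ 2)) * Real.cos (phase φ x)) +
      Q s A (fun x => Real.exp (-(u * nrm x ^ 2)) * Real.sin (phase φ x))
        (fun x => Real.exp (-(u * nrm x ^ 2)) * Real.sin (phase φ x)) =
      G s A φ (u / 2) * ∫ x : ℝ × ℝ, Real.exp (-(2 * u * nrm x ^ 2)) := by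
  have hn := continuous_nrm
  have hp := continuous_phase φ
  have ic : Integrable (fun x => Real.exp (-(u * nrm x ^ 2)) * Real.cos (phase φ x)) :=
    (integrable_gauss hu).mul_bdd (c := 1) (by fun_prop)
      (Eventually.of_forall fun x => Real.abs_cos_le_one _)
  have is : Integrable (fun x => Real.exp (-(u * nrm x ^ 2)) * Real.sin (phase φ x)) :=
    (integrable_gauss hu).mul_bdd (c := 1) (by fun_prop)
      (Eventually.of_forall fun x => Real.abs_sin_le_one _)
  have he : ∀ x : ℝ × ℝ, |Real.exp (-(u * nrm x ^ 2))| ≤ 1 := fun x => by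
    rw [Real.abs_exp]; exact Real.exp_le_one_iff.2 (by have := nrm_nonneg x; simp; positivity)
  have bc : ∀ x, |Real.exp (-(u * nrm x ^ 2)) * Real.cos (phase φ x)| ≤ 1 := fun x => by
    rw [abs_mul]; exact mul_le_one₀ (he x) (abs_nonneg _) (Real.abs_cos_le_one _)
  have bs : ∀ x, |Real.exp (-(u * nrm x ^ 2)) * Real.sin (phase φ x)| ≤ 1 := fun x => by
    rw [abs_mul]; exact mul_le_one₀ (he x) (abs_nonneg _) (Real.abs_sin_le_one _)
  have jc := integrable_pair hs0 hs2 hA hM ic ic bc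
  have js := integrable_pair hs0 hs2 hA hM is is bs
  let H : (ℝ × ℝ) × (ℝ × ℝ) → ℝ := fun q =>
    hk s A q.1 * Real.exp (-(u / 2 * nrm q.1 ^ 2)) * Real.cos (phase φ q.1) *
      Real.exp (-(2 * u * nrm (q.2 + (1 / 2 : ℝ) • q.1) ^ 2))
  have hpt : ∀ p : (ℝ × ℝ) × (ℝ × ℝ),
      hk s A (p.1 - p.2) * (Real.exp (-(u * nrm p.2 ^ 2)) * Real.cos (phase φ p.2) *
        (Real.exp (-(u * nrm p.1 ^ 2)) * Real.cos (phase φ p.1))) +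
      hk s A (p.1 - p.2) * (Real.exp (-(u * nrm p.2 ^ 2)) * Real.sin (phase φ p.2) *
        (Real.exp (-(u * nrm p.1 ^ 2)) * Real.sin (phase φ p.1))) =
      H (p.1 - p.2, p.2) := by
    intro p
    have e : Real.exp (-(u / 2 * nrm (p.1 - p.2) ^ 2)) *
        Real.exp (-(2 * u * nrm (p.2 + (1 / 2 : ℝ) • (p.1 - p.2)) ^ 2)) =
        Real.exp (-(u * nrm p.2 ^ 2)) * Real.exp (-(u * nrm p.1 ^ 2)) := by
      rw [← Real.exp_add, ← Real.exp_add]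
      congr 1
      simp only [nrm_sq, Prod.fst_sub, Prod.snd_sub, Prod.fst_add, Prod.snd_add, Prod.smul_fst,
        Prod.smul_snd, smul_eq_mul]
      ring
    simp only [H]
    rw [phase_sub, Real.cos_sub]
    linear_combination (-(hk s A (p.1 - p.2) * (Real.cos (phase φ p.1) * Real.cos (phase φ p.2) +
      Real.sin (phase φ p.1) * Real.sin (phase φ p.2)))) * e
  have mp : MeasurePreserving (fun z : (ℝ × ℝ) × (ℝ × ℝ) => (z.1 - z.2, z.2)) :=
    measurePreserving_sub_prod (volume : Measure (ℝ × ℝ)) volume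
  have emb : MeasurableEmbedding (fun z : (ℝ × ℝ) × (ℝ × ℝ) => (z.1 - z.2, z.2)) :=
    Continuous.measurableEmbedding (by fun_prop) fun a b hab => by
      simp only [Prod.mk.injEq] at hab
      exact Prod.ext (by have := hab.1; rw [hab.2] at this; exact sub_left_injective this) hab.2
  have hH : Integrable H := by
    rw [← mp.integrable_comp_emb emb]
    exact (jc.add js).congr (Eventually.of_forall hpt)
  unfold Q
  rw [← integral_add jc js, integral_congr_ae (Eventually.of_forall hpt), mp.integral_comp emb H]
  refine (integral_prod _ hH).trans ?_
  unfold G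
  rw [← integral_mul_const]
  refine integral_congr_ae (Eventually.of_forall fun v => ?_)
  simp only [H]
  rw [integral_const_mul, integral_add_right_eq_self (fun y => Real.exp (-(2 * u * nrm y ^ 2)))]

theorem G_nonneg {s M ε : ℝ} (hs0 : 0 < s) (hs2 : s < 2) (hε : 0 < ε) {A : ℝ → ℝ}
    (hA : Measurable A) (hM : ∀ θ, |A θ| ≤ M) (H : EnergyNonneg s A ε) (φ : ℝ) {u : ℝ}
    (hu : 0 < u) : 0 ≤ G s A φ u := by
  have hn := continuous_nrm
  have hp := continuous_phase φ
  have h2 : 0 < 2 * u := by positivity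
  have h := wave_packet hs0 hs2 hA hM φ h2
  rw [mul_div_cancel_left₀ _ two_ne_zero] at h
  have he : ∀ x : ℝ × ℝ, |Real.exp (-(2 * u * nrm x ^ 2))| ≤ 1 := fun x => by
    rw [Real.abs_exp]; exact Real.exp_le_one_iff.2 (by have := nrm_nonneg x; simp; positivity)
  have q1 : 0 ≤ Q s A (fun x => Real.exp (-(2 * u * nrm x ^ 2)) * Real.cos (phase φ x))
        (fun x => Real.exp (-(2 * u * nrm x ^ 2)) * Real.cos (phase φ x)) := by
    refine Q_nonneg hs0 hs2 hε hA hM H (C := 1) (by fun_prop) (fun x => ?_)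
      ((integrable_gauss h2).mul_bdd (c := 1) (by fun_prop)
      (Eventually.of_forall fun x => Real.abs_cos_le_one _))
    rw [abs_mul]; exact mul_le_one₀ (he x) (abs_nonneg _) (Real.abs_cos_le_one _)
  have q2 : 0 ≤ Q s A (fun x => Real.exp (-(2 * u * nrm x ^ 2)) * Real.sin (phase φ x))
        (fun x => Real.exp (-(2 * u * nrm x ^ 2)) * Real.sin (phase φ x)) := by
    refine Q_nonneg hs0 hs2 hε hA hM H (C := 1) (by fun_prop) (fun x => ?_)
      ((integrable_gauss h2).mul_bdd (c := 1) (by fun_prop)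
      (Eventually.of_forall fun x => Real.abs_sin_le_one _))
    rw [abs_mul]; exact mul_le_one₀ (he x) (abs_nonneg _) (Real.abs_sin_le_one _)
  exact nonneg_of_mul_nonneg_left (h ▸ add_nonneg q1 q2) (gauss_pos (by positivity))

/-! ### Subordination: from Gaussian to exponential regularisation -/

/-- The Fourier transform at the frequency `e_φ` of the kernel regularised by `e ^ (-δ |x|)`. Unlike the
Gaussian one, this regularisation has explicit radial integrals in polar coordinates. -/
def P (s : ℝ) (A : ℝ → ℝ) (φ δ : ℝ) : ℝ :=
  ∫ x : ℝ × ℝ, hk s A x * Real.exp (-(δ * nrm x)) * Real.cos (phase φ x)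

theorem hk_zero {s : ℝ} (hs0 : 0 < s) (A : ℝ → ℝ) : hk s A 0 = 0 := by
  have : nrm 0 = 0 := by simp [nrm]
  rw [hk, this, Real.zero_rpow (by linarith), zero_mul]

theorem nrm_pos {x : ℝ × ℝ} (hx : x ≠ 0) : 0 < nrm x :=
  (norm_pos_iff.2 hx).trans_le (norm_le_nrm x)

/-- `e ^ (-δ r)` is a positive superposition of the Gaussians `e ^ (-δ² r² / (4 q²))`, hence `P` is a positive
superposition of values of `G`. -/
theorem subordination {s M δ : ℝ} (hs0 : 0 < s) (hs2 : s < 2) {A : ℝ → ℝ} (hA : Measurable A)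
    (hM : ∀ θ, |A θ| ≤ M) (φ : ℝ) (hδ : 0 < δ) :
    IntegrableOn (fun q => Real.exp (-q ^ 2) * G s A φ (δ ^ 2 / (4 * q ^ 2))) (Ioi 0) ∧
      ∫ q in Ioi (0 : ℝ), Real.exp (-q ^ 2) * G s A φ (δ ^ 2 / (4 * q ^ 2)) =
        √π / 2 * P s A φ δ := by
  have hn := continuous_nrm.measurable
  have hp := (continuous_phase φ).measurable
  have hh := measurable_hk (s := s) hA
  let F : ℝ × (ℝ × ℝ) → ℝ := fun z => Real.exp (-z.1 ^ 2) *
    (hk s A z.2 * Real.exp (-(δ ^ 2 / (4 * z.1 ^ 2) * nrm z.2 ^ 2)) * Real.cos (phase φ z.2))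
  have hFm : Measurable F := by fun_prop
  have hF : ∀ q x, F (q, x) = hk s A x * Real.cos (phase φ x) *
      Real.exp (-(q ^ 2 + (δ * nrm x / 2) ^ 2 / q ^ 2)) := by
    intro q x
    have : Real.exp (-(q ^ 2 + (δ * nrm x / 2) ^ 2 / q ^ 2)) =
        Real.exp (-q ^ 2) * Real.exp (-(δ ^ 2 / (4 * q ^ 2) * nrm x ^ 2)) := by
      rw [← Real.exp_add]
      congr 1
      rcases eq_or_ne q 0 with rfl | hq
      · simp
      · field_simp; ring
    rw [this]
    simp only [F]
    ring
  have hexp : ∀ x ≠ (0 : ℝ × ℝ), ∫ q in Ioi (0 : ℝ),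
      Real.exp (-(q ^ 2 + (δ * nrm x / 2) ^ 2 / q ^ 2)) = √π / 2 * Real.exp (-(δ * nrm x)) := by
    intro x hx
    have := nrm_pos hx
    rw [integral_exp_sq_add_div_sq (by positivity)]
    ring_nf
  have hslice : ∀ x, ∫ q in Ioi (0 : ℝ), F (q, x) = √π / 2 *
      (hk s A x * Real.exp (-(δ * nrm x)) * Real.cos (phase φ x)) := by
    intro x
    simp only [hF, integral_const_mul]
    rcases eq_or_ne x 0 with rfl | hx
    · simp [hk_zero hs0]
    · rw [hexp x hx]; ring
  have hslice' : ∀ x, ∫ q in Ioi (0 : ℝ), ‖F (q, x)‖ = √π / 2 *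
      ‖hk s A x * Real.exp (-(δ * nrm x)) * Real.cos (phase φ x)‖ := by
    intro x
    simp only [hF, norm_mul, integral_const_mul, Real.norm_eq_abs, Real.abs_exp]
    rcases eq_or_ne x 0 with rfl | hx
    · simp [hk_zero hs0]
    · rw [hexp x hx]; ring
  have iP : Integrable (fun x => hk s A x * Real.exp (-(δ * nrm x)) * Real.cos (phase φ x)) :=
    (integrable_hk_exp hs0 hs2 hδ hA hM).mul_bdd (c := 1)
      (Real.measurable_cos.comp hp).aestronglyMeasurable
      (Eventually.of_forall fun x => Real.abs_cos_le_one _)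
  have hint : Integrable F ((volume.restrict (Ioi 0)).prod volume) := by
    rw [integrable_prod_iff' hFm.aestronglyMeasurable]
    constructor
    · refine Eventually.of_forall fun x => ?_
      have g : Integrable (fun q : ℝ => Real.exp (-1 * q ^ 2)) (volume.restrict (Ioi 0)) :=
        (integrable_exp_neg_mul_sq one_pos).integrableOn
      refine (g.const_mul |hk s A x * Real.cos (phase φ x)|).mono'
        (hFm.comp (measurable_id.prodMk measurable_const)).aestronglyMeasurable
        (Eventually.of_forall fun q => ?_)
      rw [hF, norm_mul, Real.norm_eq_abs, Real.norm_eq_abs, Real.abs_exp]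
      refine mul_le_mul_of_nonneg_left (Real.exp_le_exp.2 ?_) (abs_nonneg _)
      have : 0 ≤ (δ * nrm x / 2) ^ 2 / q ^ 2 := by positivity
      linarith
    · simp only [hslice']
      exact iP.norm.const_mul _
  have hG : ∀ q, ∫ x, F (q, x) = Real.exp (-q ^ 2) * G s A φ (δ ^ 2 / (4 * q ^ 2)) := by
    intro q
    simp only [F, integral_const_mul]
    rfl
  constructor
  · have := hint.integral_prod_left
    simp only [hG] at this
    exact this
  · simp_rw [← hG]
    rw [integral_integral_swap hint]
    simp only [hslice, integral_const_mul]
    rfl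

theorem P_nonneg {s M ε : ℝ} (hs0 : 0 < s) (hs2 : s < 2) (hε : 0 < ε) {A : ℝ → ℝ}
    (hA : Measurable A) (hM : ∀ θ, |A θ| ≤ M) (H : EnergyNonneg s A ε) (φ : ℝ) {δ : ℝ}
    (hδ : 0 < δ) : 0 ≤ P s A φ δ := by
  have h := (subordination hs0 hs2 hA hM φ hδ).2
  have h0 : 0 ≤ ∫ q in Ioi (0 : ℝ), Real.exp (-q ^ 2) * G s A φ (δ ^ 2 / (4 * q ^ 2)) := by
    refine setIntegral_nonneg measurableSet_Ioi fun q hq => ?_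
    have hq' : (0 : ℝ) < q := hq
    exact mul_nonneg (Real.exp_pos _).le (G_nonneg hs0 hs2 hε hA hM H φ (by positivity))
  rw [h] at h0
  exact nonneg_of_mul_nonneg_right h0 (by positivity)

/-- A limit of the Gaussian regularisation is inherited by the exponential one, by dominated convergence. -/
theorem P_tendsto_of_G {s M c B φ : ℝ} (hs0 : 0 < s) (hs2 : s < 2) {A : ℝ → ℝ}
    (hA : Measurable A) (hM : ∀ θ, |A θ| ≤ M) (hB : ∀ u, 0 < u → |G s A φ u| ≤ B)
    (hG : Tendsto (G s A φ) (𝓝[>] 0) (𝓝 c)) :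
    Tendsto (P s A φ) (𝓝[>] 0) (𝓝 c) := by
  have g : Integrable (fun q : ℝ => Real.exp (-q ^ 2)) (volume.restrict (Ioi 0)) := by
    have : Integrable (fun q : ℝ => Real.exp (-1 * q ^ 2)) (volume.restrict (Ioi 0)) :=
        (integrable_exp_neg_mul_sq one_pos).integrableOn
    simpa using this
  have gi : ∫ q in Ioi (0 : ℝ), Real.exp (-q ^ 2) = √π / 2 := by
    simpa using integral_gaussian_Ioi 1
  have key : Tendsto (fun δ => ∫ q in Ioi (0 : ℝ), Real.exp (-q ^ 2) *
      G s A φ (δ ^ 2 / (4 * q ^ 2))) (𝓝[>] 0) (𝓝 (∫ q in Ioi (0 : ℝ), Real.exp (-q ^ 2) * c)) := by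
    refine tendsto_integral_filter_of_dominated_convergence
      (fun q => Real.exp (-q ^ 2) * B) ?_ ?_ (g.mul_const B) ?_
    · filter_upwards [self_mem_nhdsWithin] with δ hδ
      exact (subordination hs0 hs2 hA hM φ hδ).1.aestronglyMeasurable
    · filter_upwards [self_mem_nhdsWithin] with δ hδ
      refine (ae_restrict_iff' measurableSet_Ioi).2 (Eventually.of_forall fun q hq => ?_)
      have hq' : (0 : ℝ) < q := hq
      have hδ' : (0 : ℝ) < δ := hδ
      rw [norm_mul, Real.norm_eq_abs, Real.norm_eq_abs, Real.abs_exp]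
      exact mul_le_mul_of_nonneg_left (hB _ (by positivity)) (Real.exp_pos _).le
    · refine (ae_restrict_iff' measurableSet_Ioi).2 (Eventually.of_forall fun q hq => ?_)
      have hq' : (0 : ℝ) < q := hq
      refine (hG.comp ?_).const_mul _
      refine tendsto_nhdsWithin_iff.2 ⟨?_, ?_⟩
      · have : Tendsto (fun δ : ℝ => δ ^ 2 / (4 * q ^ 2)) (𝓝 0) (𝓝 (0 ^ 2 / (4 * q ^ 2))) :=
          ((continuous_pow 2).div_const _).tendsto 0
        simpa using this.mono_left nhdsWithin_le_nhds
      · filter_upwards [self_mem_nhdsWithin] with δ hδ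
        have hδ' : (0 : ℝ) < δ := hδ
        show 0 < δ ^ 2 / (4 * q ^ 2)
        positivity
  rw [integral_mul_const, gi] at key
  have hpi : 0 < √π / 2 := by positivity
  have := key.const_mul (√π / 2)⁻¹
  rw [inv_mul_cancel_left₀ hpi.ne'] at this
  refine this.congr' ?_
  filter_upwards [self_mem_nhdsWithin] with δ hδ
  rw [(subordination hs0 hs2 hA hM φ hδ).2, inv_mul_cancel_left₀ hpi.ne']

/-! ### The isotropic kernel -/

/-- The Fourier transform of a one-dimensional Gaussian, with a manifestly real right-hand side. -/
theorem gauss_fourier_one {c : ℝ} (hc : 0 < c) (t : ℝ) :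
    Integrable (fun x : ℝ => Complex.exp (Complex.I * t * x) * Complex.exp (-c * x ^ 2)) ∧
    ∫ x : ℝ, Complex.exp (Complex.I * t * x) * Complex.exp (-c * x ^ 2) =
      ((√(π / c) * Real.exp (-t ^ 2 / (4 * c)) : ℝ) : ℂ) := by
  have hcre : 0 < (c : ℂ).re := by simpa using hc
  constructor
  · refine ((integrable_cexp_neg_mul_sq hcre).bdd_mul (c := 1) (by fun_prop)
      (Eventually.of_forall fun x => ?_))
    have : Complex.I * t * x = ((t * x : ℝ) : ℂ) * Complex.I := by push_cast; ring
    rw [this, Complex.norm_exp_ofReal_mul_I]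
  · have h := fourierIntegral_gaussian hcre t
    rw [h, Real.sqrt_eq_rpow]
    push_cast [Complex.ofReal_cpow (show 0 ≤ π / c by positivity)]
    rfl

theorem gauss_cos {c : ℝ} (hc : 0 < c) (t : ℝ) :
    Integrable (fun x : ℝ => Real.exp (-(c * x ^ 2)) * Real.cos (t * x)) ∧
    Integrable (fun x : ℝ => Real.exp (-(c * x ^ 2)) * Real.sin (t * x)) ∧
    ∫ x : ℝ, Real.exp (-(c * x ^ 2)) * Real.cos (t * x) =
      √(π / c) * Real.exp (-t ^ 2 / (4 * c)) ∧
    ∫ x : ℝ, Real.exp (-(c * x ^ 2)) * Real.sin (t * x) = 0 := by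
  obtain ⟨hi, he⟩ := gauss_fourier_one hc t
  have hpt : ∀ x : ℝ, Complex.exp (Complex.I * t * x) * Complex.exp (-c * x ^ 2) =
      ((Real.exp (-(c * x ^ 2)) * Real.cos (t * x) : ℝ) : ℂ) +
      ((Real.exp (-(c * x ^ 2)) * Real.sin (t * x) : ℝ) : ℂ) * Complex.I := by
    intro x
    have e1 : Complex.I * t * x = ((t * x : ℝ) : ℂ) * Complex.I := by push_cast; ring
    have e2 : -(c : ℂ) * x ^ 2 = ((-(c * x ^ 2) : ℝ) : ℂ) := by push_cast; ring
    rw [e1, e2, Complex.exp_mul_I, ← Complex.ofReal_cos, ← Complex.ofReal_sin,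
      ← Complex.ofReal_exp]
    push_cast
    ring
  have hre : ∀ x : ℝ, RCLike.re (Complex.exp (Complex.I * t * x) * Complex.exp (-c * x ^ 2)) =
      Real.exp (-(c * x ^ 2)) * Real.cos (t * x) := fun x => by rw [hpt]; simp [-Complex.ofReal_mul]
  have him : ∀ x : ℝ, RCLike.im (Complex.exp (Complex.I * t * x) * Complex.exp (-c * x ^ 2)) =
      Real.exp (-(c * x ^ 2)) * Real.sin (t * x) := fun x => by rw [hpt]; simp [-Complex.ofReal_mul]
  have i1 := hi.re
  have i2 := hi.im
  have e1 := integral_re hi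
  have e2 := integral_im hi
  simp only [hre] at i1 e1
  simp only [him] at i2 e2
  refine ⟨i1, i2, ?_, ?_⟩
  · rw [e1, he]; exact Complex.ofReal_re _
  · rw [e2, he]; exact Complex.ofReal_im (√(π / c) * Real.exp (-t ^ 2 / (4 * c)))

/-- The Fourier transform of a two-dimensional Gaussian at a frequency of length one. -/
theorem gauss_phase {c : ℝ} (hc : 0 < c) (φ : ℝ) :
    ∫ x : ℝ × ℝ, Real.exp (-(c * nrm x ^ 2)) * Real.cos (phase φ x) =
      π / c * Real.exp (-(π ^ 2 / c)) := by
  obtain ⟨c1, s1, ec1, es1⟩ := gauss_cos hc (2 * π * Real.cos φ)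
  obtain ⟨c2, s2, ec2, es2⟩ := gauss_cos hc (2 * π * Real.sin φ)
  have hpt : ∀ x : ℝ × ℝ, Real.exp (-(c * nrm x ^ 2)) * Real.cos (phase φ x) =
      Real.exp (-(c * x.1 ^ 2)) * Real.cos (2 * π * Real.cos φ * x.1) *
        (Real.exp (-(c * x.2 ^ 2)) * Real.cos (2 * π * Real.sin φ * x.2)) -
      Real.exp (-(c * x.1 ^ 2)) * Real.sin (2 * π * Real.cos φ * x.1) *
        (Real.exp (-(c * x.2 ^ 2)) * Real.sin (2 * π * Real.sin φ * x.2)) := by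
    intro x
    have e1 : phase φ x = 2 * π * Real.cos φ * x.1 + 2 * π * Real.sin φ * x.2 := by
      unfold phase; ring
    have e2 : -(c * nrm x ^ 2) = -(c * x.1 ^ 2) + -(c * x.2 ^ 2) := by rw [nrm_sq]; ring
    rw [e1, e2, Real.cos_add, Real.exp_add]
    ring
  have e3 : Real.exp (-(2 * π * Real.cos φ) ^ 2 / (4 * c)) *
      Real.exp (-(2 * π * Real.sin φ) ^ 2 / (4 * c)) = Real.exp (-(π ^ 2 / c)) := by
    rw [← Real.exp_add]
    congr 1
    field_simp
    linear_combination (-4 : ℝ) * Real.sin_sq_add_cos_sq φ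
  simp only [hpt]
  refine (integral_sub (c1.mul_prod c2) (s1.mul_prod s2)).trans ?_
  have a1 := integral_prod_mul (μ := (volume : Measure ℝ)) (ν := (volume : Measure ℝ))
    (fun x => Real.exp (-(c * x ^ 2)) * Real.cos (2 * π * Real.cos φ * x))
    (fun x => Real.exp (-(c * x ^ 2)) * Real.cos (2 * π * Real.sin φ * x))
  have a2 := integral_prod_mul (μ := (volume : Measure ℝ)) (ν := (volume : Measure ℝ))
    (fun x => Real.exp (-(c * x ^ 2)) * Real.sin (2 * π * Real.cos φ * x))
    (fun x => Real.exp (-(c * x ^ 2)) * Real.sin (2 * π * Real.sin φ * x))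
  refine (congrArg₂ (· - ·) a1 a2).trans ?_
  rw [ec1, ec2, es1, ← e3, zero_mul, sub_zero]
  have : √(π / c) * √(π / c) = π / c := Real.mul_self_sqrt (by positivity)
  linear_combination Real.exp (-(2 * π * Real.cos φ) ^ 2 / (4 * c)) *
      Real.exp (-(2 * π * Real.sin φ) ^ 2 / (4 * c)) * this

/-- For the profile `1`, `|x| ^ (-s)` is a Gamma-type superposition of Gaussians `e ^ (-t |x|²)`, and the
Fourier transform is computed under the integral sign. -/
theorem G_one {s u : ℝ} (hs0 : 0 < s) (hs2 : s < 2) (φ : ℝ) (hu : 0 < u) :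
    Real.Gamma (s / 2) * G s (fun _ => 1) φ u =
      ∫ t in Ioi (0 : ℝ), t ^ (s / 2 - 1) * (π / (t + u) * Real.exp (-(π ^ 2 / (t + u)))) := by
  have hn := continuous_nrm.measurable
  have hp := (continuous_phase φ).measurable
  let F : ℝ × (ℝ × ℝ) → ℝ := fun z => z.1 ^ (s / 2 - 1) *
    (Real.exp (-((z.1 + u) * nrm z.2 ^ 2)) * Real.cos (phase φ z.2))
  have hFm : Measurable F := by fun_prop
  have hF : ∀ t x, F (t, x) = Real.exp (-(u * nrm x ^ 2)) * Real.cos (phase φ x) *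
      (t ^ (s / 2 - 1) * Real.exp (-(nrm x ^ 2 * t))) := by
    intro t x
    have : -((t + u) * nrm x ^ 2) = -(u * nrm x ^ 2) + -(nrm x ^ 2 * t) := by ring
    simp only [F]
    rw [this, Real.exp_add]
    ring
  have hg : ∀ x ≠ (0 : ℝ × ℝ), ∫ t in Ioi (0 : ℝ), t ^ (s / 2 - 1) * Real.exp (-(nrm x ^ 2 * t)) =
      nrm x ^ (-s) * Real.Gamma (s / 2) := by
    intro x hx
    have h := nrm_pos hx
    rw [Real.integral_rpow_mul_exp_neg_mul_Ioi (by positivity) (by positivity), one_div,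
      Real.inv_rpow (by positivity), ← Real.rpow_natCast, ← Real.rpow_mul h.le,
      Real.rpow_neg h.le]
    congr 3
    push_cast; ring
  have hslice : ∀ x ≠ (0 : ℝ × ℝ), ∫ t in Ioi (0 : ℝ), F (t, x) = Real.Gamma (s / 2) *
      (hk s (fun _ => 1) x * Real.exp (-(u * nrm x ^ 2)) * Real.cos (phase φ x)) := by
    intro x hx
    simp only [hF, integral_const_mul]
    rw [hg x hx, hk]; ring
  have hslice' : ∀ x ≠ (0 : ℝ × ℝ), ∫ t in Ioi (0 : ℝ), ‖F (t, x)‖ = Real.Gamma (s / 2) *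
      ‖hk s (fun _ => 1) x * Real.exp (-(u * nrm x ^ 2)) * Real.cos (phase φ x)‖ := by
    intro x hx
    have : ∀ t ∈ Ioi (0 : ℝ), ‖F (t, x)‖ = |Real.exp (-(u * nrm x ^ 2)) * Real.cos (phase φ x)| *
      (t ^ (s / 2 - 1) * Real.exp (-(nrm x ^ 2 * t))) := by
      intro t ht
      have ht' : (0 : ℝ) < t := ht
      rw [hF, norm_mul, Real.norm_eq_abs, Real.norm_of_nonneg (by positivity)]
    rw [setIntegral_congr_fun measurableSet_Ioi this, integral_const_mul, hg x hx, hk, norm_mul,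
      norm_mul, mul_one, Real.norm_of_nonneg (Real.rpow_nonneg (nrm_nonneg x) _), abs_mul,
      Real.norm_eq_abs, Real.norm_eq_abs]
    ring
  have hM : ∀ θ : ℝ, |(fun _ => (1 : ℝ)) θ| ≤ 1 := fun _ => by simp
  have iG : Integrable (fun x => hk s (fun _ => 1) x * Real.exp (-(u * nrm x ^ 2)) *
      Real.cos (phase φ x)) :=
    (integrable_hk_gauss hs0 hs2 hu measurable_const hM).mul_bdd (c := 1)
      (Real.measurable_cos.comp hp).aestronglyMeasurable
      (Eventually.of_forall fun x => Real.abs_cos_le_one _)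
  have hne : ∀ᵐ x : ℝ × ℝ, x ≠ 0 := Measure.ae_ne volume 0
  have hint : Integrable F ((volume.restrict (Ioi 0)).prod volume) := by
    rw [integrable_prod_iff' hFm.aestronglyMeasurable]
    constructor
    · filter_upwards [hne] with x hx
      simp only [hF]
      refine Integrable.const_mul ?_ _
      have h2 : 0 < nrm x ^ 2 := by have := nrm_pos hx; positivity
      simpa [neg_mul, IntegrableOn] using integrableOn_rpow_mul_exp_neg_mul_rpow (p := 1)
        (s := s / 2 - 1) (b := nrm x ^ 2) (by linarith) one_pos h2
    · refine (iG.norm.const_mul (Real.Gamma (s / 2))).congr ?_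
      filter_upwards [hne] with x hx
      exact (hslice' x hx).symm
  have hG : ∀ t ∈ Ioi (0 : ℝ), ∫ x, F (t, x) =
      t ^ (s / 2 - 1) * (π / (t + u) * Real.exp (-(π ^ 2 / (t + u)))) := by
    intro t ht
    have ht' : (0 : ℝ) < t := ht
    simp only [F, integral_const_mul]
    rw [gauss_phase (by positivity)]
  rw [← setIntegral_congr_fun measurableSet_Ioi hG, integral_integral_swap hint, G,
    ← integral_const_mul]
  refine integral_congr_ae ?_
  filter_upwards [hne] with x hx
  exact (hslice x hx).symm

/-- A bound, uniform in `u`, for the integrand of `G_one`: `e ^ (-π² / (t + u))` absorbs `π / (t + u)` for small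
`t`, while `π / (t + u) ≤ π / t` suffices for large `t`. -/
theorem exists_dominating {s : ℝ} (hs0 : 0 < s) (hs2 : s < 2) :
    ∃ g : ℝ → ℝ, IntegrableOn g (Ioi 0) ∧ ∀ t > 0, ∀ u > 0,
      ‖t ^ (s / 2 - 1) * (π / (t + u) * Real.exp (-(π ^ 2 / (t + u))))‖ ≤ g t := by
  classical
  refine ⟨fun t => if t ≤ 1 then t ^ (s / 2 - 1) else π * t ^ (s / 2 - 2), ?_, ?_⟩
  · rw [← Ioc_union_Ioi_eq_Ioi (zero_le_one' ℝ)]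
    refine IntegrableOn.union ?_ ?_
    · have h : IntegrableOn (fun t : ℝ => t ^ (s / 2 - 1)) (Ioc 0 1) :=
        (intervalIntegral.intervalIntegrable_rpow' (by linarith)).1
      refine h.congr_fun (fun t ht => ?_) measurableSet_Ioc
      simp [ht.2]
    · have h : IntegrableOn (fun t : ℝ => π * t ^ (s / 2 - 2)) (Ioi 1) :=
        (integrableOn_Ioi_rpow_of_lt (by linarith) one_pos).const_mul _
      refine h.congr_fun (fun t ht => ?_) measurableSet_Ioi
      simp [not_le.2 (show (1 : ℝ) < t from ht)]
  · intro t ht u hu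
    have ht0 : (0 : ℝ) ≤ t ^ (s / 2 - 1) := by positivity
    rw [Real.norm_of_nonneg (by positivity)]
    have hw : 0 < t + u := by positivity
    dsimp only
    split_ifs with h
    · refine mul_le_of_le_one_right ht0 ?_
      have h1 : π ^ 2 / (t + u) + 1 ≤ Real.exp (π ^ 2 / (t + u)) := Real.add_one_le_exp _
      rw [Real.exp_neg, ← div_eq_mul_inv, div_le_one (Real.exp_pos _)]
      refine le_trans ?_ h1
      have : π / (t + u) ≤ π ^ 2 / (t + u) := by
        gcongr
        nlinarith [Real.pi_gt_three]
      linarith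
    · have e : t ^ (s / 2 - 2) = t ^ (s / 2 - 1) / t := by
        rw [show s / 2 - 2 = (s / 2 - 1) - 1 by ring, Real.rpow_sub_one ht.ne']
      rw [e]
      have h1 : Real.exp (-(π ^ 2 / (t + u))) ≤ 1 :=
        Real.exp_le_one_iff.2 (by simp; positivity)
      have h2 : π / (t + u) ≤ π / t := by
        gcongr
        linarith
      calc t ^ (s / 2 - 1) * (π / (t + u) * Real.exp (-(π ^ 2 / (t + u))))
          ≤ t ^ (s / 2 - 1) * (π / t * 1) := by gcongr
        _ = _ := by ring

theorem G_one_bound {s : ℝ} (hs0 : 0 < s) (hs2 : s < 2) (φ : ℝ) :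
    ∃ B, ∀ u, 0 < u → |G s (fun _ => 1) φ u| ≤ B := by
  obtain ⟨g, hg, hb⟩ := exists_dominating hs0 hs2
  have hΓ : 0 < Real.Gamma (s / 2) := Real.Gamma_pos_of_pos (by positivity)
  refine ⟨(∫ t in Ioi 0, g t) / Real.Gamma (s / 2), fun u hu => ?_⟩
  rw [le_div_iff₀ hΓ, mul_comm]
  have h := G_one hs0 hs2 φ hu
  have : Real.Gamma (s / 2) * |G s (fun _ => 1) φ u| = |Real.Gamma (s / 2) * G s (fun _ => 1) φ u| := by
    rw [abs_mul, abs_of_pos hΓ]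
  rw [this, h, ← Real.norm_eq_abs]
  exact norm_integral_le_of_norm_le hg
    ((ae_restrict_iff' measurableSet_Ioi).2 (Eventually.of_forall fun t ht => hb t ht u hu))

/-- The Fourier transform of `|x| ^ (-s)` on the unit circle is the constant `c_s`. -/
theorem G_one_tendsto {s : ℝ} (hs0 : 0 < s) (hs2 : s < 2) (φ : ℝ) :
    Tendsto (G s (fun _ => 1) φ) (𝓝[>] 0) (𝓝 (cC s)) := by
  obtain ⟨g, hg, hb⟩ := exists_dominating hs0 hs2
  have hΓ : 0 < Real.Gamma (s / 2) := Real.Gamma_pos_of_pos (by positivity)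
  have key : Tendsto (fun u => ∫ t in Ioi (0 : ℝ),
      t ^ (s / 2 - 1) * (π / (t + u) * Real.exp (-(π ^ 2 / (t + u))))) (𝓝[>] 0)
      (𝓝 (∫ t in Ioi (0 : ℝ), t ^ (s / 2 - 1) * (π / t * Real.exp (-(π ^ 2 / t))))) := by
    refine tendsto_integral_filter_of_dominated_convergence g ?_ ?_ hg ?_
    · exact Eventually.of_forall fun u => Measurable.aestronglyMeasurable (by fun_prop)
    · filter_upwards [self_mem_nhdsWithin] with u hu
      exact (ae_restrict_iff' measurableSet_Ioi).2
        (Eventually.of_forall fun t ht => hb t ht u hu)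
    · refine (ae_restrict_iff' measurableSet_Ioi).2 (Eventually.of_forall fun t ht => ?_)
      have ht' : (0 : ℝ) < t := ht
      refine Tendsto.mono_left ?_ nhdsWithin_le_nhds
      have : ContinuousAt (fun u : ℝ => t ^ (s / 2 - 1) *
          (π / (t + u) * Real.exp (-(π ^ 2 / (t + u))))) 0 := by
        have : t + 0 ≠ 0 := by simpa using ht'.ne'
        fun_prop (disch := assumption)
      simpa [ContinuousAt] using this
  rw [cC_integral hs2] at key
  have := key.div_const (Real.Gamma (s / 2))
  refine this.congr' ?_
  filter_upwards [self_mem_nhdsWithin] with u hu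
  rw [← G_one hs0 hs2 φ hu, mul_div_cancel_left₀ _ hΓ.ne']

theorem P_one_tendsto {s : ℝ} (hs0 : 0 < s) (hs2 : s < 2) (φ : ℝ) :
    Tendsto (P s (fun _ => 1) φ) (𝓝[>] 0) (𝓝 (cC s)) := by
  obtain ⟨B, hB⟩ := G_one_bound hs0 hs2 φ
  exact P_tendsto_of_G (M := 1) hs0 hs2 measurable_const (fun _ => by simp) hB
    (G_one_tendsto hs0 hs2 φ)

/-! ### Polar coordinates -/

theorem nrm_polar {r : ℝ} (hr : 0 ≤ r) (θ : ℝ) : nrm (r * Real.cos θ, r * Real.sin θ) = r := by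
  unfold nrm
  have : (r * Real.cos θ) ^ 2 + (r * Real.sin θ) ^ 2 = r ^ 2 := by
    linear_combination r ^ 2 * Real.sin_sq_add_cos_sq θ
  simp only [this, Real.sqrt_sq hr]

theorem ang_polar {r θ : ℝ} (hr : 0 < r) (hθ : θ ∈ Ioo (-π) π) :
    ang (r * Real.cos θ, r * Real.sin θ) = θ := by
  have : Complex.arg ⟨r * Real.cos θ, r * Real.sin θ⟩ = θ := by
    have h := Complex.arg_mul_cos_add_sin_mul_I hr (Ioo_subset_Ioc_self hθ)
    have e : (⟨r * Real.cos θ, r * Real.sin θ⟩ : ℂ) =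
        r * (Complex.cos θ + Complex.sin θ * Complex.I) := by
      apply Complex.ext <;>
        simp [← Complex.ofReal_cos, ← Complex.ofReal_sin, -Complex.ofReal_mul]
    rw [e, h]
  unfold ang
  simp only [this, if_neg hθ.2.ne]

theorem P_polar {s M δ : ℝ} (hs2 : s < 2) {A : ℝ → ℝ} (hA : Measurable A)
    (hM : ∀ θ, |A θ| ≤ M) (φ : ℝ) (hδ : 0 < δ) :
    P s A φ δ = ∫ θ in Ioo (-π) π, A θ * radial (2 - s) δ (Real.cos (φ - θ)) := by
  unfold P
  rw [← integral_comp_polarCoord_symm]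
  let F : ℝ × ℝ → ℝ := fun p =>
    A p.2 * (p.1 ^ (2 - s - 1) * Real.exp (-(δ * p.1)) *
      Real.cos (2 * π * (p.1 * Real.cos (φ - p.2))))
  have hFm : Measurable F := by fun_prop
  have hpt : ∀ p ∈ polarCoord.target, p.1 • (hk s A (polarCoord.symm p) *
      Real.exp (-(δ * nrm (polarCoord.symm p))) * Real.cos (phase φ (polarCoord.symm p))) = F p := by
    rintro ⟨r, θ⟩ hp
    rw [polarCoord_target] at hp
    obtain ⟨hr, hθ⟩ := hp
    have hr' : (0 : ℝ) < r := hr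
    have e : r ^ (2 - s - 1) = r * r ^ (-s) := by
      rw [show 2 - s - 1 = 1 + -s by ring, Real.rpow_add hr', Real.rpow_one]
    have ep : phase φ (r * Real.cos θ, r * Real.sin θ) = 2 * π * (r * Real.cos (φ - θ)) := by
      unfold phase; rw [Real.cos_sub]; ring
    simp only [polarCoord_symm_apply, hk, nrm_polar hr'.le, ang_polar hr' hθ, ep, F, smul_eq_mul, e]
    ring
  rw [setIntegral_congr_fun polarCoord.open_target.measurableSet hpt, polarCoord_target]
  have g1 : IntegrableOn (fun r : ℝ => r ^ (2 - s - 1) * Real.exp (-(δ * r))) (Ioi 0) := by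
    simpa [neg_mul] using integrableOn_rpow_mul_exp_neg_mul_rpow (p := 1)
        (s := 2 - s - 1) (b := δ) (by linarith) one_pos hδ
  have g2 : IntegrableOn (fun _ : ℝ => M) (Ioo (-π) π) := by simp
  have hint : Integrable F ((volume.restrict (Ioi 0)).prod (volume.restrict (Ioo (-π) π))) := by
    refine (g1.norm.mul_prod g2).mono' hFm.aestronglyMeasurable
      (Eventually.of_forall fun p => ?_)
    simp only [F, norm_mul (A p.2), norm_mul (_ * _ : ℝ)]
    rw [mul_comm]
    refine mul_le_mul ?_ (hM _) (norm_nonneg _) (norm_nonneg _)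
    exact mul_le_of_le_one_right (norm_nonneg _) (Real.abs_cos_le_one _)
  rw [Measure.volume_eq_prod, ← Measure.prod_restrict, integral_prod_symm _ hint]
  simp only [F, integral_const_mul]
  rfl

/-- If the profile vanishes linearly where the frequency is orthogonal to the ray, the limit `δ → 0⁺` can be
taken inside the angular integral and yields the first term of `Omt`. -/
theorem P_tendsto_of_vanish {s M C φ : ℝ} (hs0 : 0 < s) (hs2 : s < 2) {A : ℝ → ℝ}
    (hA : Measurable A) (hM : ∀ θ, |A θ| ≤ M) (hC : ∀ θ, |A θ| ≤ C * |Real.cos (φ - θ)|) :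
    Tendsto (P s A φ) (𝓝[>] 0) (𝓝 (tauC (2 - s) *
      ∫ θ in (-π)..π, |Real.cos (φ - θ)| ^ (-2 + s) * A θ)) := by
  have ha : 0 < 2 - s := by linarith
  have hcos : Measurable (fun θ => Real.cos (φ - θ)) := by fun_prop
  -- the dominating function `θ ↦ |cos (φ - θ)| ^ (s - 1)` up to constants
  have hdom : IntegrableOn (fun θ => |Real.cos (φ - θ)| ^ (s - 1)) (Ioo (-π) π) := by
    rcases le_or_gt s 1 with h | h
    · have h1 := sin_rpow_integrable (p := s - 1) (by linarith) (by linarith)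
        (-π + (π / 2 - φ)) (π + (π / 2 - φ))
      have h2 := h1.comp_add_right (π / 2 - φ)
      simp only [add_sub_cancel_right] at h2
      refine IntegrableOn.mono_set ?_ Ioo_subset_Ioc_self
      refine h2.1.congr_fun (fun θ _ => ?_) measurableSet_Ioc
      dsimp only
      rw [show θ + (π / 2 - φ) = π / 2 - (φ - θ) by ring, Real.sin_pi_div_two_sub]
    · refine Measure.integrableOn_of_bounded (M := 1) (by simp)
        (Measurable.aestronglyMeasurable (by fun_prop)) (Eventually.of_forall fun θ => ?_)
      rw [Real.norm_of_nonneg (by positivity)]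
      exact Real.rpow_le_one (abs_nonneg _) (Real.abs_cos_le_one _) (by linarith)
  have hzero : ∀ θ, Real.cos (φ - θ) = 0 → A θ = 0 := fun θ h => by
    have := hC θ
    rw [h, abs_zero, mul_zero] at this
    exact abs_nonpos_iff.1 this
  have key : Tendsto (fun δ => ∫ θ in Ioo (-π) π, A θ * radial (2 - s) δ (Real.cos (φ - θ)))
      (𝓝[>] 0) (𝓝 (∫ θ in Ioo (-π) π, A θ * (Real.Gamma (2 - s) *
        ((2 * π * |Real.cos (φ - θ)|) ^ (-(2 - s)) * Real.cos ((2 - s) * π / 2))))) := by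
    refine tendsto_integral_filter_of_dominated_convergence
      (fun θ => C * Real.Gamma (2 - s) * (2 * π) ^ (-(2 - s)) * |Real.cos (φ - θ)| ^ (s - 1))
      ?_ ?_ (hdom.const_mul _) ?_
    · refine Eventually.of_forall fun δ => ?_
      refine (hA.mul ?_).aestronglyMeasurable
      have hm : Measurable (Function.uncurry fun k r : ℝ => r ^ (2 - s - 1) * Real.exp (-(δ * r)) *
          Real.cos (2 * π * (r * k))) := by
        unfold Function.uncurry; fun_prop
      exact (hm.stronglyMeasurable.integral_prod_right).measurable.comp hcos
    · filter_upwards [self_mem_nhdsWithin] with δ hδ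
      refine Eventually.of_forall fun θ => ?_
      rw [norm_mul, Real.norm_eq_abs, Real.norm_eq_abs]
      rcases eq_or_ne (Real.cos (φ - θ)) 0 with h | h
      · have hC0 : 0 ≤ C := by
          have := (abs_nonneg _).trans (hC φ)
          simpa using this
        have := (Real.Gamma_pos_of_pos ha).le
        rw [hzero θ h]; simp only [abs_zero, zero_mul]; positivity
      · have hp : 0 < |Real.cos (φ - θ)| := abs_pos.2 h
        have e : |Real.cos (φ - θ)| ^ (s - 1) =
            |Real.cos (φ - θ)| * |Real.cos (φ - θ)| ^ (-(2 - s)) := by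
          rw [show s - 1 = 1 + -(2 - s) by ring, Real.rpow_add hp, Real.rpow_one]
        calc |A θ| * |radial (2 - s) δ (Real.cos (φ - θ))|
            ≤ (C * |Real.cos (φ - θ)|) *
              (Real.Gamma (2 - s) * (2 * π * |Real.cos (φ - θ)|) ^ (-(2 - s))) :=
              mul_le_mul (hC θ) (radial_bound ha hδ h) (abs_nonneg _)
                ((abs_nonneg _).trans (hC θ))
          _ = _ := by
              rw [Real.mul_rpow (by positivity) hp.le, e]; ring
    · refine Eventually.of_forall fun θ => ?_
      rcases eq_or_ne (Real.cos (φ - θ)) 0 with h | h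
      · simp only [hzero θ h, zero_mul]; exact tendsto_const_nhds
      · exact (radial_tendsto ha h).const_mul _
  have elim : ∫ θ in Ioo (-π) π, A θ * (Real.Gamma (2 - s) *
        ((2 * π * |Real.cos (φ - θ)|) ^ (-(2 - s)) * Real.cos ((2 - s) * π / 2))) =
      tauC (2 - s) * ∫ θ in (-π)..π, |Real.cos (φ - θ)| ^ (-2 + s) * A θ := by
    rw [intervalIntegral.integral_of_le (by linarith [Real.pi_pos]), integral_Ioc_eq_integral_Ioo,
      ← integral_const_mul]
    refine integral_congr_ae (Eventually.of_forall fun θ => ?_)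
    dsimp only
    rw [Real.mul_rpow (by positivity) (abs_nonneg _), tauC, show -(2 - s) = -2 + s by ring]
    ring
  rw [elim] at key
  refine key.congr' ?_
  filter_upwards [self_mem_nhdsWithin] with δ hδ
  exact (P_polar hs2 hA hM φ hδ).symm

/-! ### Convergence to the transformed angle function -/

theorem exists_lipschitz {Ω : ℝ → ℝ} (hΩ : SatisfiesH Ω) :
    ∃ K : ℝ, ∀ x y, |Ω x - Ω y| ≤ K * |x - y| := by
  obtain ⟨hc, hper, -, -⟩ := hΩ
  have hd : Continuous (deriv Ω) := hc.continuous_deriv (by norm_num)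
  have hdper : Function.Periodic (deriv Ω) (2 * π) := fun x => by
    rw [← deriv_comp_add_const, funext hper]
  obtain ⟨K, hK⟩ := hdper.isBounded_of_continuous (by positivity) hd |>.exists_norm_le
  refine ⟨K, fun x y => ?_⟩
  exact convex_univ.norm_image_sub_le_of_norm_deriv_le
    (fun z _ => (hc.differentiable (by norm_num)) z) (fun z _ => hK _ (mem_range_self z))
    (mem_univ y) (mem_univ x)

theorem exists_bound {Ω : ℝ → ℝ} (hΩ : SatisfiesH Ω) : ∃ M : ℝ, ∀ θ, |Ω θ| ≤ M := by
  obtain ⟨K, hK⟩ := (show Function.Periodic Ω (2 * π) from hΩ.2.1).isBounded_of_continuous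
    (by positivity) hΩ.1.continuous |>.exists_norm_le
  exact ⟨K, fun θ => hK _ (mem_range_self θ)⟩

/-- `Ω - Ω(φ + π / 2)` vanishes linearly at the zeros of `θ ↦ cos (φ - θ)`, since `Ω` is Lipschitz and all of
these zeros are translates of `φ + π / 2` by multiples of `π`. -/
theorem vanish_bound {Ω : ℝ → ℝ} (hΩ : SatisfiesH Ω) (φ : ℝ) :
    ∃ C : ℝ, ∀ θ, |Ω θ - Ω (φ + π / 2)| ≤ C * |Real.cos (φ - θ)| := by
  obtain ⟨K, hK⟩ := exists_lipschitz hΩ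
  have hK0 : 0 ≤ K := by simpa using (abs_nonneg _).trans (hK 1 0)
  have hπ : Function.Periodic Ω π := hΩ.2.2.2
  refine ⟨K * (π / 2), fun θ => ?_⟩
  -- reduce `θ` modulo `π` to a point `y` within `π / 2` of `φ + π / 2`
  obtain ⟨n, hn, -⟩ := existsUnique_add_zsmul_mem_Ico Real.pi_pos θ φ
  set y := θ + n • π with hy
  have h1 : Ω θ = Ω y := (hπ.zsmul n θ).symm
  have h2 : |Real.cos (φ - θ)| = |Real.sin (y - (φ + π / 2))| := by
    have : φ - θ = n * π - (y - φ) := by rw [hy, zsmul_eq_mul]; ring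
    rw [this, ← sub_sub, Real.sin_sub_pi_div_two, abs_neg, Real.cos_int_mul_pi_sub, abs_mul, abs_zpow,
      abs_neg, abs_one, one_zpow, one_mul]
  rw [h1, h2]
  have hx : |y - (φ + π / 2)| ≤ π / 2 := abs_le.2 ⟨by linarith [hn.1], by linarith [hn.2]⟩
  have h3 : 2 / π * |y - (φ + π / 2)| ≤ |Real.sin (y - (φ + π / 2))| :=
    Real.mul_abs_le_abs_sin hx
  have h4 : |y - (φ + π / 2)| ≤ π / 2 * |Real.sin (y - (φ + π / 2))| := by
    have := mul_le_mul_of_nonneg_left h3 (show 0 ≤ π / 2 by positivity)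
    rwa [← mul_assoc, show π / 2 * (2 / π) = 1 by field_simp, one_mul] at this
  calc _ ≤ K * |y - (φ + π / 2)| := hK _ _
    _ ≤ K * (π / 2 * |Real.sin (y - (φ + π / 2))|) := by gcongr
    _ = _ := by ring

/-- The regularised Fourier transform of `|x| ^ (-s) Ω(θ(x))` at `e_φ` converges to `Ω̃(φ)`: split `Ω` as
`(Ω - Ω(φ + π / 2)) + Ω(φ + π / 2)` and treat the constant by `P_one_tendsto`. -/
theorem P_tendsto_Omt {s : ℝ} (hs0 : 0 < s) (hs2 : s < 2) {Ω : ℝ → ℝ} (hΩ : SatisfiesH Ω) (φ : ℝ) :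
    Tendsto (P s Ω φ) (𝓝[>] 0) (𝓝 (Omt s Ω φ)) := by
  obtain ⟨M, hM⟩ := exists_bound hΩ
  obtain ⟨C, hC⟩ := vanish_bound hΩ φ
  have hm : Measurable Ω := hΩ.1.continuous.measurable
  set c := Ω (φ + π / 2) with hc
  have hm' : Measurable (fun θ => Ω θ - c) := hm.sub_const c
  have hM' : ∀ θ, |Ω θ - c| ≤ M + M := fun θ =>
    (abs_sub _ _).trans (add_le_add (hM _) (hM _))
  have h1 := P_tendsto_of_vanish hs0 hs2 hm' hM' hC
  have h2 := (P_one_tendsto hs0 hs2 φ).const_mul c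
  have h3 := h1.add h2
  rw [mul_comm c] at h3
  refine h3.congr' ?_
  filter_upwards [self_mem_nhdsWithin] with δ hδ
  have hp := (continuous_phase φ).measurable
  have i1 := (integrable_hk_exp hs0 hs2 hδ hm' hM').mul_bdd (c := 1)
      (Real.measurable_cos.comp hp).aestronglyMeasurable
      (Eventually.of_forall fun x => Real.abs_cos_le_one _)
  have i2 := (integrable_hk_exp (M := 1) hs0 hs2 hδ (A := fun _ => 1) measurable_const
      (fun _ => by simp)).mul_bdd (c := 1)
      (Real.measurable_cos.comp hp).aestronglyMeasurable
      (Eventually.of_forall fun x => Real.abs_cos_le_one _)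
  unfold P
  rw [← integral_const_mul]
  refine (integral_add i1 (i2.const_mul c)).symm.trans ?_
  refine integral_congr_ae (Eventually.of_forall fun x => ?_)
  simp only [hk, Function.comp]
  ring

/-- if `Ω̃` is negative somewhere, then `W` is infinitesimally concave:
arbitrarily small mean-zero bounded perturbations have negative energy. -/
theorem statement2 (s : ℝ) (hs0 : 0 < s) (hs2 : s < 2) (Ω : ℝ → ℝ) (hΩ : SatisfiesH Ω)
    (φ₀ : ℝ) (hneg : Omt s Ω φ₀ < 0) (ε : ℝ) (hε : 0 < ε) :
    ∃ μ : ℝ × ℝ → ℝ, Measurable μ ∧ (∃ M : ℝ, ∀ x, |μ x| ≤ M) ∧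
      Function.support μ ⊆ {x : ℝ × ℝ | nrm x ≤ ε} ∧
      (∫ x : ℝ × ℝ, μ x) = 0 ∧ energyR s Ω μ < 0 := by
  by_contra hcon
  have H : EnergyNonneg s Ω ε := fun μ h1 h2 h3 h4 =>
    not_lt.1 fun h5 => hcon ⟨μ, h1, h2, h3, h4, h5⟩
  obtain ⟨M, hM⟩ := exists_bound hΩ
  have hm : Measurable Ω := hΩ.1.continuous.measurable
  refine hneg.not_ge (ge_of_tendsto (P_tendsto_Omt hs0 hs2 hΩ φ₀) ?_)
  filter_upwards [self_mem_nhdsWithin] with δ hδ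
  exact P_nonneg hs0 hs2 hε hm hM H φ₀ hδ

end Aniso
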